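/- arXiv:1806.02798 — 5 statements merged into one kernel-verified Lean document; each statement's English description precedes it below -/
import Mathlib

section
/- Let 0 ≤ λ < 1/2 and let η ∈ X_λ. Then Tη ∈ X_λ, i.e., the box-ball operator T preserves the asymptotic density of balls on both half-lines. -/
open MeasureTheory Filter Finset

/-- A ball configuration: a box at each integer, occupied (`true`) or empty (`false`). -/
abbrev Cfg := ℤ → Bool

/-- Numerical (integer) value of a box. -/
def valZ (b : Bool) : ℤ := if b then 1 else 0

/-- Numerical (real) value of a box. -/
def valR (b : Bool) : ℝ := if b then 1 else 0

/-- `x` is a record of the configuration `η`: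
for every `z ≤ x`, the number of balls in `[z,x]` is strictly smaller than the
number of empty boxes in `[z,x]`. -/
def isRecord (η : Cfg) (x : ℤ) : Prop :=
  ∀ z ≤ x, (∑ y ∈ Finset.Icc z x, valZ (η y)) < ∑ y ∈ Finset.Icc z x, (1 - valZ (η y))

open Classical in
/-- The box-ball (Takahashi–Satsuma) operator `T`. -/
noncomputable def bbsT (η : Cfg) : Cfg := fun x => if isRecord η x then false else !(η x)

/-- `η` has asymptotic density `lam` of balls on both half lines. -/
def inXlam (lam : ℝ) (η : Cfg) : Prop :=
  Tendsto (fun y : ℕ => (∑ x ∈ Finset.Icc (-(y : ℤ)) 0, valR (η x)) / (y : ℝ))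
    atTop (nhds lam) ∧
  Tendsto (fun y : ℕ => (∑ x ∈ Finset.Icc (0 : ℤ) (y : ℤ), valR (η x)) / (y : ℝ))
    atTop (nhds lam)

/-- `η ∈ 𝒳`: it has a well-defined density `0 < lam < 1/2`. -/
def inX (η : Cfg) : Prop := ∃ lam : ℝ, 0 < lam ∧ lam < 1 / 2 ∧ inXlam lam η

/-- `ξ` is a walk lift of the configuration `η`. -/
def IsLift (η : Cfg) (ξ : ℤ → ℤ) : Prop :=
  ∀ x : ℤ, ξ x - ξ (x - 1) = 2 * valZ (η x) - 1

/-- Running minimum `min_{y ≤ x} ξ(y)` of a walk. -/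
noncomputable def runMin (ξ : ℤ → ℤ) (x : ℤ) : ℤ := sInf (ξ '' Set.Iic x)

/-- The box-ball operator on walks: reflection at the running minimum. -/
noncomputable def liftT (ξ : ℤ → ℤ) : ℤ → ℤ := fun x => 2 * runMin ξ x - ξ x

/-- The canonical walk lift of `η` with value `0` at the origin. -/
noncomputable def xi0 (η : Cfg) : ℤ → ℤ := fun x =>
  if 0 ≤ x then ∑ y ∈ Finset.Icc 1 x, (2 * valZ (η y) - 1)
  else -∑ y ∈ Finset.Icc (x + 1) 0, (2 * valZ (η y) - 1)

/-- Linear error bound. -/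
def LinBd (lam : ℝ) (N : ℤ → ℤ) : Prop :=
  ∀ ε : ℝ, 0 < ε → ∃ C : ℝ, ∀ x : ℤ, |(N x : ℝ) - lam * x| ≤ ε * |(x : ℝ)| + C

/-- `N` is a counting function of `η`. -/
def IsCount (η : Cfg) (N : ℤ → ℤ) : Prop := ∀ x : ℤ, N x - N (x - 1) = valZ (η x)

lemma exists_count (η : Cfg) : ∃ N, IsCount η N := by
  refine ⟨fun x => ∑ y ∈ Finset.Ioc 0 x, valZ (η y) - ∑ y ∈ Finset.Ioc x 0, valZ (η y), ?_⟩
  intro x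
  simp only
  rcases le_or_gt 1 x with h | h
  · have e1 : Finset.Ioc 0 x = insert x (Finset.Ioc 0 (x - 1)) := by
      ext y; simp only [Finset.mem_Ioc, Finset.mem_insert]; omega
    have e2 : Finset.Ioc x 0 = ∅ := Finset.Ioc_eq_empty (by omega)
    have e3 : Finset.Ioc (x - 1) 0 = ∅ := Finset.Ioc_eq_empty (by omega)
    rw [e1, e2, e3, Finset.sum_insert (by simp)]
    simp
  · have e1 : Finset.Ioc (x - 1) 0 = insert x (Finset.Ioc x 0) := by
      ext y; simp only [Finset.mem_Ioc, Finset.mem_insert]; omega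
    have e2 : Finset.Ioc 0 x = ∅ := Finset.Ioc_eq_empty (by omega)
    have e3 : Finset.Ioc 0 (x - 1) = ∅ := Finset.Ioc_eq_empty (by omega)
    rw [e1, e2, e3, Finset.sum_insert (by simp)]
    simp

lemma count_sum {η : Cfg} {N : ℤ → ℤ} (hN : IsCount η N) (z x : ℤ) (h : z - 1 ≤ x) :
    ∑ y ∈ Finset.Icc z x, valZ (η y) = N x - N (z - 1) := by
  induction x, h using Int.le_induction with
  | base => simp
  | succ n hn ih =>
    have e : Finset.Icc z (n + 1) = insert (n + 1) (Finset.Icc z n) := by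
      ext y; simp only [Finset.mem_Icc, Finset.mem_insert]; omega
    rw [e, Finset.sum_insert (by simp), ih]
    have := hN (n + 1)
    rw [add_sub_cancel_right] at this
    omega

lemma valR_eq (b : Bool) : valR b = ((valZ b : ℤ) : ℝ) := by
  unfold valR valZ; split_ifs <;> simp

lemma count_sumR {η : Cfg} {N : ℤ → ℤ} (hN : IsCount η N) (z x : ℤ) (h : z - 1 ≤ x) :
    ∑ y ∈ Finset.Icc z x, valR (η y) = (N x : ℝ) - N (z - 1) := by
  simp_rw [valR_eq]
  rw [← Int.cast_sum, count_sum hN z x h]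
  push_cast; ring

lemma tendsto_iff_bd (lam : ℝ) (u : ℕ → ℝ) :
    Tendsto (fun y : ℕ => u y / (y : ℝ)) atTop (nhds lam) ↔
    ∀ ε : ℝ, 0 < ε → ∃ C : ℝ, ∀ y : ℕ, |u y - lam * y| ≤ ε * y + C := by
  rw [Metric.tendsto_atTop]
  constructor
  · intro h ε hε
    obtain ⟨n, hn⟩ := h ε hε
    refine ⟨|u 0| + ∑ k ∈ Finset.range n, |u k - lam * k|, fun y => ?_⟩
    have hs : 0 ≤ ∑ k ∈ Finset.range n, |u k - lam * k| :=
      Finset.sum_nonneg (fun _ _ => abs_nonneg _)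
    have h0 : 0 ≤ |u 0| := abs_nonneg _
    have hy0 : 0 ≤ ε * (y : ℝ) := by positivity
    rcases Nat.eq_zero_or_pos y with h0' | hpos
    · subst h0'
      simp; linarith
    rcases lt_or_ge y n with hy | hy
    · have := Finset.single_le_sum (f := fun k : ℕ => |u k - lam * k|)
        (fun _ _ => abs_nonneg _) (Finset.mem_range.2 hy)
      linarith
    · have h2 := hn y hy
      rw [Real.dist_eq] at h2
      have hp : (0 : ℝ) < y := by exact_mod_cast hpos
      have : u y - lam * y = (u y / y - lam) * y := by field_simp
      rw [this, abs_mul, abs_of_pos hp]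
      nlinarith
  · intro h ε hε
    obtain ⟨C, hC⟩ := h (ε / 2) (by linarith)
    obtain ⟨n, hn⟩ := exists_nat_gt (2 * C / ε)
    refine ⟨n + 1, fun y hy => ?_⟩
    have hyn : (n : ℝ) + 1 ≤ y := by exact_mod_cast hy
    have hn0 : (0 : ℝ) ≤ n := Nat.cast_nonneg n
    have hp : (0 : ℝ) < y := by linarith
    rw [Real.dist_eq]
    have : u y / y - lam = (u y - lam * y) / y := by field_simp
    rw [this, abs_div, abs_of_pos hp, div_lt_iff₀ hp]
    rw [div_lt_iff₀ hε] at hn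
    have := hC y
    nlinarith

lemma inXlam_iff (lam : ℝ) {η : Cfg} {N : ℤ → ℤ} (hN : IsCount η N) :
    inXlam lam η ↔ LinBd lam N := by
  unfold inXlam LinBd
  rw [tendsto_iff_bd, tendsto_iff_bd]
  have hl : ∀ y : ℕ, ∑ x ∈ Finset.Icc (-(y : ℤ)) 0, valR (η x) = (N 0 : ℝ) - N (-(y : ℤ) - 1) :=
    fun y => count_sumR hN _ _ (by omega)
  have hr : ∀ y : ℕ, ∑ x ∈ Finset.Icc (0 : ℤ) (y : ℤ), valR (η x) = (N y : ℝ) - N (0 - 1) :=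
    fun y => count_sumR hN _ _ (by omega)
  simp_rw [hl, hr]
  constructor
  · rintro ⟨h1, h2⟩ ε hε
    obtain ⟨C1, hC1⟩ := h1 ε hε
    obtain ⟨C2, hC2⟩ := h2 ε hε
    refine ⟨|C1| + |C2| + |(N 0 : ℝ)| + |(N (0 - 1) : ℝ)| + |lam|, fun x => ?_⟩
    have a1 := le_abs_self C1
    have a2 := le_abs_self C2
    have b1 := abs_nonneg C1
    have b2 := abs_nonneg C2
    have c1 := abs_nonneg (N 0 : ℝ)
    have c2 := abs_nonneg (N (0 - 1) : ℝ)
    have c3 := abs_nonneg lam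
    rcases le_or_gt 0 x with hx | hx
    · lift x to ℕ using hx
      have := hC2 x
      have e : (N x : ℝ) - lam * ((x : ℤ) : ℝ) = ((N x : ℝ) - N (0 - 1) - lam * x) + N (0 - 1) := by
        push_cast; ring
      rw [e]
      have t := abs_add_le ((N x : ℝ) - N (0 - 1) - lam * x) (N (0 - 1) : ℝ)
      have : |((x : ℤ) : ℝ)| = x := by simp
      rw [this]
      linarith
    · obtain ⟨y, rfl⟩ : ∃ y : ℕ, x = -(y : ℤ) - 1 := ⟨(-x - 1).toNat, by omega⟩
      have := hC1 y
      have e : (N (-(y : ℤ) - 1) : ℝ) - lam * ((-(y : ℤ) - 1 : ℤ) : ℝ)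
          = N 0 + lam - ((N 0 : ℝ) - N (-(y : ℤ) - 1) - lam * y) := by
        push_cast; ring
      rw [e]
      have t := abs_sub (N 0 + lam : ℝ) ((N 0 : ℝ) - N (-(y : ℤ) - 1) - lam * y)
      have t2 := abs_add_le (N 0 : ℝ) lam
      have : |((-(y : ℤ) - 1 : ℤ) : ℝ)| = y + 1 := by
        push_cast
        rw [abs_of_nonpos (by have := Nat.cast_nonneg (α := ℝ) y; linarith)]; ring
      rw [this]
      linarith
  · intro h
    constructor
    · intro ε hε
      obtain ⟨C, hC⟩ := h ε hε
      refine ⟨C + ε + |(N 0 : ℝ)| + |lam|, fun y => ?_⟩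
      have h1 := hC (-(y : ℤ) - 1)
      have : |((-(y : ℤ) - 1 : ℤ) : ℝ)| = y + 1 := by
        push_cast
        rw [abs_of_nonpos (by have := Nat.cast_nonneg (α := ℝ) y; linarith)]; ring
      rw [this] at h1
      push_cast at h1
      rw [abs_le] at h1 ⊢
      have a1 := le_abs_self (N 0 : ℝ)
      have a2 := neg_abs_le (N 0 : ℝ)
      have a3 := le_abs_self lam
      have a4 := neg_abs_le lam
      constructor <;> linarith
    · intro ε hε
      obtain ⟨C, hC⟩ := h ε hε
      refine ⟨C + |(N (0 - 1) : ℝ)|, fun y => ?_⟩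
      have h1 := hC y
      have : |((y : ℤ) : ℝ)| = y := by simp
      rw [this] at h1
      push_cast at h1
      rw [abs_le] at h1 ⊢
      have a1 := le_abs_self (N (0 - 1) : ℝ)
      have a2 := neg_abs_le (N (0 - 1) : ℝ)
      constructor <;> linarith

lemma count_record {η : Cfg} {N : ℤ → ℤ} (hN : IsCount η N) (x : ℤ) :
    isRecord η x ↔ ∀ z ≤ x - 1, 2 * N x - x < 2 * N z - z := by
  unfold isRecord
  have key : ∀ z ≤ x, ((∑ y ∈ Finset.Icc z x, valZ (η y)) <
      ∑ y ∈ Finset.Icc z x, (1 - valZ (η y)) ↔ 2 * N x - x < 2 * N (z - 1) - (z - 1)) := by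
    intro z hz
    rw [Finset.sum_sub_distrib, count_sum hN z x (by omega)]
    simp only [Finset.sum_const, Int.card_Icc, nsmul_eq_mul, mul_one]
    rw [Int.toNat_of_nonneg (by omega)]
    omega
  constructor
  · intro h z hz
    have := (key (z + 1) (by omega)).1 (h (z + 1) (by omega))
    simpa using this
  · intro h z hz
    exact (key z hz).2 (h (z - 1) (by omega))

lemma density_key {lam : ℝ} {N : ℤ → ℤ} (h : LinBd lam N) {ε : ℝ} (hε : 0 < ε)
    (hle : 2 * ε ≤ 1 - 2 * lam) : ∃ C : ℝ, ∀ x y : ℤ, y ≤ x →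
      (((2 * N x - x) - (2 * N y - y) : ℤ) : ℝ) ≤ 4 * ε * |(x : ℝ)| + C := by
  obtain ⟨C, hC⟩ := h ε hε
  refine ⟨4 * C, fun x y hxy => ?_⟩
  have h1 := (abs_le.1 (hC x)).2
  have h2 := (abs_le.1 (hC y)).1
  have hxy' : (y : ℝ) ≤ x := by exact_mod_cast hxy
  have h3 : |(y : ℝ)| ≤ |(x : ℝ)| + (x - y) := by
    have := abs_sub (x : ℝ) (x - y)
    rw [sub_sub_cancel, abs_of_nonneg (sub_nonneg.2 hxy')] at this
    exact this
  push_cast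
  have h4 : ε * |(y : ℝ)| ≤ ε * (|(x : ℝ)| + (x - y)) := mul_le_mul_of_nonneg_left h3 hε.le
  have h5 : 2 * ε * ((x : ℝ) - y) ≤ (1 - 2 * lam) * (x - y) :=
    mul_le_mul_of_nonneg_right hle (sub_nonneg.2 hxy')
  nlinarith

lemma exists_min {S : ℤ → ℤ} (x : ℤ) (B : ℝ)
    (h : ∀ y ≤ x, ((S x - S y : ℤ) : ℝ) ≤ B) : ∃ m ≤ x, ∀ z ≤ x, S m ≤ S z := by
  obtain ⟨b, hb⟩ := exists_int_gt B
  have := Int.exists_least_of_bdd (P := fun v => ∃ m ≤ x, S m = v)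
    ⟨S x - b, by
      rintro _ ⟨m, hm, rfl⟩
      have h1 := lt_of_le_of_lt (h m hm) hb
      have h2 : S x - S m < b := by exact_mod_cast h1
      omega⟩ ⟨S x, x, le_rfl, rfl⟩
  obtain ⟨v, ⟨m, hm, rfl⟩, hv⟩ := this
  exact ⟨m, hm, fun z hz => hv _ ⟨z, hz, rfl⟩⟩

/-- Let `0 ≤ λ < 1/2` and `η ∈ 𝒳_λ`.  Then `Tη ∈ 𝒳_λ`: the
box-ball operator preserves the asymptotic density of balls on both half lines. -/
theorem density_conservation (lam : ℝ) (h0 : 0 ≤ lam) (h1 : lam < 1 / 2)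
    (η : Cfg) (hη : inXlam lam η) : inXlam lam (bbsT η) := by
  obtain ⟨N, hN⟩ := exists_count η
  have hB : LinBd lam N := (inXlam_iff lam hN).1 hη
  have hmin : ∀ x : ℤ, ∃ m ≤ x, ∀ z ≤ x, 2 * N m - m ≤ 2 * N z - z := by
    obtain ⟨C, hC⟩ := density_key hB (ε := (1 - 2 * lam) / 2) (by linarith) (by linarith)
    intro x
    exact exists_min (S := fun x => 2 * N x - x) x _ (fun y hy => hC x y hy)
  choose m hm hmle using hmin
  have hN' : IsCount (bbsT η) (fun x => N x - ((2 * N x - x) - (2 * N (m x) - m x))) := by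
    intro x
    have s := hN x
    have r := count_record hN x
    have hm1 := hm x
    have hm2 := hm (x - 1)
    have q1 := hmle x x le_rfl
    have q2 := hmle x (m (x - 1)) (by omega)
    have q3 := hmle (x - 1) (x - 1) le_rfl
    have q4 : m x = x ∨ 2 * N (m (x - 1)) - m (x - 1) ≤ 2 * N (m x) - m x := by
      rcases eq_or_lt_of_le hm1 with h | h
      · exact Or.inl h
      · exact Or.inr (hmle (x - 1) _ (by omega))
    have q4' : m x = x → 2 * N (m x) - m x = 2 * N x - x := fun h => by rw [h]
    unfold bbsT
    by_cases hr : isRecord η x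
    · have hr' := r.1 hr
      have a1 := hr' (m (x - 1)) hm2
      have a2 := hr' (x - 1) le_rfl
      simp only [hr, if_true]
      cases hb : η x <;> simp [hb, valZ] at s ⊢ <;> omega
    · have hr' : ∃ z ≤ x - 1, 2 * N z - z ≤ 2 * N x - x := by
        by_contra hcon
        push Not at hcon
        exact hr (r.2 hcon)
      obtain ⟨z, hz, hz'⟩ := hr'
      have a1 := hmle (x - 1) z hz
      simp only [hr, if_false]
      cases hb : η x <;> simp [hb, valZ] at s ⊢ <;> omega
  rw [inXlam_iff lam hN']
  intro ε hε
  obtain ⟨δ, hδ, hδ1, hδ2⟩ : ∃ δ : ℝ, 0 < δ ∧ 2 * δ ≤ 1 - 2 * lam ∧ 5 * δ ≤ ε :=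
    ⟨min ((1 - 2 * lam) / 2) (ε / 5), lt_min (by linarith) (by linarith),
      by linarith [min_le_left ((1 - 2 * lam) / 2) (ε / 5)],
      by linarith [min_le_right ((1 - 2 * lam) / 2) (ε / 5)]⟩
  obtain ⟨C, hC⟩ := density_key hB hδ hδ1
  obtain ⟨D, hD⟩ := hB δ hδ
  refine ⟨|C| + D, fun x => ?_⟩
  have u1 := hC x (m x) (hm x)
  have u2 := abs_le.1 (hD x)
  have u3 : (0 : ℝ) ≤ (((2 * N x - x) - (2 * N (m x) - m x) : ℤ) : ℝ) := by
    have := hmle x x le_rfl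
    exact_mod_cast sub_nonneg.2 this
  have u4 : 5 * δ * |(x : ℝ)| ≤ ε * |(x : ℝ)| := mul_le_mul_of_nonneg_right hδ2 (abs_nonneg _)
  have u5 : 0 ≤ δ * |(x : ℝ)| := by positivity
  have u6 := le_abs_self C
  have u7 := abs_nonneg C
  rw [Int.cast_sub (N x), abs_le]
  constructor <;> linarith [u2.1, u2.2]
end

section
/- Let η be a ball configuration and let ξ be a walk lift of η such that min_{y≤x} ξ(y) > −∞ for every x ∈ ℤ. Define Tξ(x) := 2·min_{y≤x} ξ(y) − ξ(x). Then Tξ is a walk lift of Tη, that is, Tξ(x) − Tξ(x−1) = 2·(Tη)(x) − 1 for all x ∈ ℤ (reflecting the walk at its running minimum implements the box-ball dynamics). -/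
open MeasureTheory Filter Finset

/-- Telescoping of the walk increments. -/
lemma lift_sum (η : Cfg) (ξ : ℤ → ℤ) (hlift : IsLift η ξ) (x : ℤ) (n : ℕ) :
    ∑ y ∈ Finset.Icc (x - n) x, (2 * valZ (η y) - 1) = ξ x - ξ (x - n - 1) := by
  induction n with
  | zero => simp [hlift x]
  | succ k ih =>
    have h : Finset.Icc (x - ((k + 1 : ℕ) : ℤ)) x
        = insert (x - ((k + 1 : ℕ) : ℤ)) (Finset.Icc (x - (k : ℤ)) x) := by
      ext a
      simp only [Finset.mem_Icc, Finset.mem_insert]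
      push_cast
      omega
    rw [h, Finset.sum_insert (by rw [Finset.mem_Icc]; push_cast; omega), ih, ← hlift]
    have e : x - ((k + 1 : ℕ) : ℤ) = x - k - 1 := by push_cast; ring
    rw [e]
    ring

/-- Records are the strict running minima of the walk. -/
lemma isRecord_iff (η : Cfg) (ξ : ℤ → ℤ) (hlift : IsLift η ξ) (x : ℤ) :
    isRecord η x ↔ ∀ y < x, ξ x < ξ y := by
  have key : ∀ z ≤ x, (∑ y ∈ Finset.Icc z x, valZ (η y))
      - ∑ y ∈ Finset.Icc z x, (1 - valZ (η y)) = ξ x - ξ (z - 1) := by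
    intro z hz
    obtain ⟨n, hn⟩ := Int.eq_ofNat_of_zero_le (sub_nonneg.mpr hz)
    have hz' : z = x - n := by omega
    subst hz'
    rw [← lift_sum η ξ hlift x n, ← Finset.sum_sub_distrib]
    exact Finset.sum_congr rfl fun _ _ => by ring
  constructor
  · intro h y hy
    have h1 := h (y + 1) (by omega)
    have h2 := key (y + 1) (by omega)
    rw [add_sub_cancel_right] at h2
    omega
  · intro h z hz
    have h1 := h (z - 1) (by omega)
    have h2 := key z hz
    omega

lemma runMin_eq (ξ : ℤ → ℤ) (x m : ℤ) (h : IsLeast (ξ '' Set.Iic x) m) : runMin ξ x = m :=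
  h.csInf_eq

lemma runMin_least (ξ : ℤ → ℤ) (x : ℤ) (hb : BddBelow (ξ '' Set.Iic x)) :
    (∃ y ≤ x, ξ y = runMin ξ x) ∧ ∀ y ≤ x, runMin ξ x ≤ ξ y := by
  refine ⟨?_, fun y hy => csInf_le hb ⟨y, hy, rfl⟩⟩
  obtain ⟨y, hy, h⟩ := Int.csInf_mem (⟨ξ x, x, le_refl x, rfl⟩ : (ξ '' Set.Iic x).Nonempty) hb
  exact ⟨y, hy, h⟩

/-- If `ξ` is a walk lift of `η` whose running minimum is
finite (`min_{y≤x} ξ(y) > -∞`, i.e. `{ξ(y) : y ≤ x}` is bounded below, for every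
`x`), then `Tξ(x) := 2·min_{y≤x} ξ(y) − ξ(x)` is a walk lift of `Tη`:
reflecting the walk at its running minimum implements the box-ball dynamics. -/
theorem liftT_is_lift_of_bbsT (η : Cfg) (ξ : ℤ → ℤ) (hlift : IsLift η ξ)
    (hbdd : ∀ x : ℤ, BddBelow (ξ '' Set.Iic x)) :
    IsLift (bbsT η) (liftT ξ) := by
  intro x
  have hx := hlift x
  obtain ⟨⟨a, ha, ha'⟩, hA⟩ := runMin_least ξ x (hbdd x)
  obtain ⟨⟨b, hb, hb'⟩, hB⟩ := runMin_least ξ (x - 1) (hbdd (x - 1))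
  have h1 := hA b (by omega)
  simp only [liftT, bbsT]
  by_cases hr : isRecord η x
  · rw [if_pos hr]
    rw [isRecord_iff η ξ hlift] at hr
    have h2 := hr (x - 1) (by omega)
    have h3 := hr b (by omega)
    have h4 := hB (x - 1) le_rfl
    have h5 := hA x le_rfl
    have h6 : a = x := by
      by_contra hne
      have := hr a (by omega)
      omega
    subst h6
    cases h : η a <;> simp [valZ, h] at hx ⊢ <;> omega
  · rw [if_neg hr]
    rw [isRecord_iff η ξ hlift] at hr
    push Not at hr
    obtain ⟨y, hy, hyx⟩ := hr
    have h2 := hB y (by omega)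
    have h3 : runMin ξ (x - 1) ≤ runMin ξ x := by
      rcases eq_or_lt_of_le ha with e | l
      · subst e
        omega
      · have := hB a (by omega)
        omega
    cases h : η x <;> simp [valZ, h] at hx ⊢ <;> omega
end

section
/- For 0 < λ < 1/2, let ν_λ := Bernoulli(λ)^{⊗ℤ} be the product measure on {0,1}^ℤ under which the coordinates are i.i.d. with ν_λ(η(x) = 1) = λ. Then ν_λ is T-invariant: the pushforward of ν_λ under the box-ball operator T equals ν_λ. -/
open MeasureTheory Filter Finset

open MeasureTheory in
/-- `ν` is the Bernoulli(`lam`) product measure on `{0,1}^ℤ`: a probability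
measure under which the coordinates are i.i.d. with `ν(η(x) = 1) = lam`;
equivalently, the measure of every finite cylinder is the corresponding product.
(This property characterizes `Bernoulli(lam)^{⊗ℤ}` uniquely.) -/
def IsBernoulliProduct (lam : ℝ) (ν : Measure Cfg) : Prop :=
  IsProbabilityMeasure ν ∧
  ∀ (s : Finset ℤ) (f : ℤ → Bool),
    ν {η : Cfg | ∀ x ∈ s, η x = f x} =
      ∏ x ∈ s, (if f x then ENNReal.ofReal lam else ENNReal.ofReal (1 - lam))


namespace BBS

/-- Weight of a letter. -/
noncomputable def wt (lam : ℝ) (b : Bool) : ℝ := if b then lam else 1 - lam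

/-- Finite measures agreeing on cylinders are equal. -/
lemma ext_cyl (μ ν : Measure Cfg) [IsFiniteMeasure μ] [IsFiniteMeasure ν]
    (h : ∀ (s : Finset ℤ) (f : ℤ → Bool),
      μ {η : Cfg | ∀ x ∈ s, η x = f x} = ν {η : Cfg | ∀ x ∈ s, η x = f x}) : μ = ν := by
  have key : IsProjectiveLimit μ (fun s : Finset ℤ => ν.map s.restrict) := by
    intro s
    refine Measure.ext_of_singleton (fun g => ?_)
    rw [Measure.map_apply (by fun_prop) (measurableSet_singleton g),
      Measure.map_apply (by fun_prop) (measurableSet_singleton g)]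
    have : (s.restrict ⁻¹' {g} : Set Cfg) =
        {η : Cfg | ∀ x ∈ s, η x = (fun y => if hy : y ∈ s then g ⟨y, hy⟩ else false) x} := by
      ext η
      simp only [Set.mem_preimage, Set.mem_singleton_iff, Set.mem_ofPred_eq]
      constructor
      · rintro rfl x hx
        simp [hx]
      · intro hh
        funext ⟨x, hx⟩
        have := hh x hx
        simpa [hx] using this
    rw [this, h]
  have key2 : IsProjectiveLimit ν (fun s : Finset ℤ => ν.map s.restrict) := fun s => rfl
  exact key.unique key2

lemma cyl_real {lam : ℝ} (h0 : 0 < lam) (h1 : lam < 1 / 2)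
    {ν : Measure Cfg} (hν : IsBernoulliProduct lam ν) (s : Finset ℤ) (f : ℤ → Bool) :
    ν.real {η : Cfg | ∀ x ∈ s, η x = f x} = ∏ x ∈ s, wt lam (f x) := by
  rw [measureReal_def, hν.2, ENNReal.toReal_prod]
  refine Finset.prod_congr rfl (fun x _ => ?_)
  unfold wt
  split_ifs
  · exact ENNReal.toReal_ofReal h0.le
  · exact ENNReal.toReal_ofReal (by linarith)

/-- `A` depends only on coordinates `≤ x`. -/
def Past (x : ℤ) (A : Set Cfg) : Prop :=
  ∀ η η' : Cfg, (∀ y ≤ x, η y = η' y) → (η ∈ A → η' ∈ A)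

lemma measurableSet_coord (x : ℤ) (b : Bool) : MeasurableSet {η : Cfg | η x = b} :=
  measurableSet_eq_fun (measurable_pi_apply x) measurable_const

lemma measurableSet_cyl (s : Finset ℤ) (f : ℤ → Bool) :
    MeasurableSet {η : Cfg | ∀ x ∈ s, η x = f x} := by
  have : {η : Cfg | ∀ x ∈ s, η x = f x} = ⋂ x ∈ s, {η : Cfg | η x = f x} := by
    ext; simp
  rw [this]
  exact Finset.measurableSet_biInter _ (fun x _ => measurableSet_coord x _)

lemma measurable_upd (x : ℤ) : Measurable (fun η : Cfg => Function.update η x false) := by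
  refine measurable_pi_lambda _ (fun y => ?_)
  by_cases h : y = x
  · subst h; simp
  · simp only [Function.update_of_ne h]; exact measurable_pi_apply y

lemma indep {lam : ℝ} (h0 : 0 < lam) (h1 : lam < 1 / 2)
    {ν : Measure Cfg} (hν : IsBernoulliProduct lam ν) (x : ℤ) (b : Bool) {A : Set Cfg}
    (hA : MeasurableSet A) (hP : Past (x - 1) A) :
    ν.real {η | η ∈ A ∧ η x = b} = wt lam b * ν.real A := by
  have := hν.1
  have hw : 0 ≤ wt lam b := by unfold wt; split_ifs <;> linarith
  set u : Cfg → Cfg := fun η => Function.update η x false with hu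
  have hum : Measurable u := measurable_upd x
  have key : (ν.restrict {η | η x = b}).map u = (ENNReal.ofReal (wt lam b)) • (ν.map u) := by
    have : IsFiniteMeasure ((ENNReal.ofReal (wt lam b)) • (ν.map u)) :=
      Measure.smul_finite _ ENNReal.ofReal_ne_top
    refine ext_cyl _ _ (fun s f => ?_)
    rw [Measure.map_apply hum (measurableSet_cyl s f), Measure.smul_apply,
      Measure.map_apply hum (measurableSet_cyl s f),
      Measure.restrict_apply (hum (measurableSet_cyl s f)), smul_eq_mul]
    by_cases hx : x ∈ s ∧ f x = true
    · have : u ⁻¹' {η : Cfg | ∀ x ∈ s, η x = f x} = ∅ := by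
        ext η
        simp only [Set.mem_preimage, Set.mem_ofPred_eq, Set.mem_empty_iff_false, iff_false]
        intro h
        have := h x hx.1
        simp [hu, hx.2] at this
      simp [this]
    · have e1 : u ⁻¹' {η : Cfg | ∀ x ∈ s, η x = f x} =
          {η : Cfg | ∀ y ∈ s.erase x, η y = f y} := by
        ext η
        simp only [Set.mem_preimage, Set.mem_ofPred_eq, Finset.mem_erase]
        constructor
        · rintro h y ⟨hy, hs⟩
          have := h y hs
          simpa [hu, Function.update_of_ne hy] using this
        · intro h y hs
          by_cases hy : y = x
          · subst hy
            simp only [hs, true_and, Bool.not_eq_true] at hx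
            simp [hu, hx]
          · simpa [hu, Function.update_of_ne hy] using h y ⟨hy, hs⟩
      have e2 : {η : Cfg | ∀ y ∈ s.erase x, η y = f y} ∩ {η | η x = b} =
          {η : Cfg | ∀ y ∈ insert x (s.erase x), η y = Function.update f x b y} := by
        ext η
        simp only [Set.mem_inter_iff, Set.mem_ofPred_eq, Finset.forall_mem_insert,
          Function.update_self]
        rw [and_comm]
        refine and_congr Iff.rfl (forall₂_congr fun y hy => ?_)
        rw [Function.update_of_ne (Finset.ne_of_mem_erase hy)]
      rw [e1, e2]
      rw [← ENNReal.ofReal_toReal (measure_ne_top ν {η : Cfg | ∀ y ∈ s.erase x, η y = f y}),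
        ← ENNReal.ofReal_mul hw, ← ENNReal.ofReal_toReal (measure_ne_top ν
          {η : Cfg | ∀ y ∈ insert x (s.erase x), η y = Function.update f x b y})]
      congr 1
      have c1 := cyl_real h0 h1 hν (s.erase x) f
      have c2 := cyl_real h0 h1 hν (insert x (s.erase x)) (Function.update f x b)
      rw [measureReal_def] at c1 c2
      rw [c1, c2, Finset.prod_insert (Finset.notMem_erase x s), Function.update_self]
      congr 1
      refine Finset.prod_congr rfl (fun y hy => ?_)
      rw [Function.update_of_ne (Finset.ne_of_mem_erase hy)]
  have hAu : u ⁻¹' A = A := by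
    ext η
    have hag : ∀ y ≤ x - 1, u η y = η y := fun y hy => by
      simp only [hu]; rw [Function.update_of_ne (by omega)]
    exact ⟨hP _ _ hag, hP _ _ (fun y hy => (hag y hy).symm)⟩
  have : (((ν.restrict {η | η x = b}).map u) A).toReal =
      (((ENNReal.ofReal (wt lam b)) • (ν.map u)) A).toReal := by rw [key]
  rw [Measure.map_apply hum hA, Measure.smul_apply, Measure.map_apply hum hA, hAu,
    Measure.restrict_apply hA, smul_eq_mul, ENNReal.toReal_mul, ENNReal.toReal_ofReal hw] at this
  exact this

/-- Partial sums of steps to the left starting from `x`. -/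
def S (η : Cfg) : ℕ → ℤ → ℤ
  | 0, _ => 0
  | n + 1, x => (if η x then 1 else -1) + S η n (x - 1)

lemma S_eq (η : Cfg) (n : ℕ) : ∀ x : ℤ,
    S η n x = ∑ y ∈ Finset.Icc (x - n + 1) x, (2 * valZ (η y) - 1) := by
  induction n with
  | zero => intro x; simp [S]
  | succ n ih =>
    intro x
    have : Finset.Icc (x - ((n + 1 : ℕ) : ℤ) + 1) x =
        insert x (Finset.Icc (x - 1 - n + 1) (x - 1)) := by
      ext y; simp only [Finset.mem_Icc, Finset.mem_insert]; push_cast; omega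
    rw [this, Finset.sum_insert (by simp), S, ih]
    congr 1
    unfold valZ
    split_ifs <;> norm_num

lemma S_congr {η η' : Cfg} (n : ℕ) : ∀ x : ℤ, (∀ y ≤ x, η y = η' y) → S η n x = S η' n x := by
  induction n with
  | zero => intro x _; rfl
  | succ n ih =>
    intro x h
    simp only [S]
    rw [h x le_rfl, ih (x - 1) (fun y hy => h y (by omega))]

lemma measurable_S (n : ℕ) : ∀ x : ℤ, Measurable (fun η : Cfg => S η n x) := by
  induction n with
  | zero => intro x; exact measurable_const
  | succ n ih =>
    intro x
    simp only [S]
    exact (Measurable.ite (measurableSet_coord x true) measurable_const measurable_const).add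
      (ih (x - 1))

/-- The carrier load at `x` is at least `k`. -/
def Ge (x : ℤ) (k : ℕ) : Set Cfg := {η | ∃ n, (k : ℤ) ≤ S η n x}

/-- Truncated version. -/
def GeN (N : ℕ) (x : ℤ) (k : ℕ) : Set Cfg := {η | ∃ n ≤ N, (k : ℤ) ≤ S η n x}

lemma past_Ge (x : ℤ) (k : ℕ) : Past x (Ge x k) := by
  rintro η η' h ⟨n, hn⟩
  exact ⟨n, by rwa [← S_congr n x h]⟩

lemma past_GeN (N : ℕ) (x : ℤ) (k : ℕ) : Past x (GeN N x k) := by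
  rintro η η' h ⟨n, hN, hn⟩
  exact ⟨n, hN, by rwa [← S_congr n x h]⟩

lemma meas_le (n : ℕ) (x : ℤ) (k : ℕ) : MeasurableSet {η : Cfg | (k : ℤ) ≤ S η n x} :=
  measurableSet_le measurable_const (measurable_S n x)

lemma meas_Ge (x : ℤ) (k : ℕ) : MeasurableSet (Ge x k) := by
  have : Ge x k = ⋃ n, {η : Cfg | (k : ℤ) ≤ S η n x} := by ext; simp [Ge]
  rw [this]
  exact MeasurableSet.iUnion (fun n => meas_le n x k)

lemma meas_GeN (N : ℕ) (x : ℤ) (k : ℕ) : MeasurableSet (GeN N x k) := by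
  have : GeN N x k = ⋃ n, ⋃ (_ : n ≤ N), {η : Cfg | (k : ℤ) ≤ S η n x} := by ext; simp [GeN]
  rw [this]
  exact MeasurableSet.iUnion (fun n => MeasurableSet.iUnion (fun _ => meas_le n x k))

lemma Ge_zero (x : ℤ) : Ge x 0 = Set.univ := by
  ext η; simp only [Ge, Set.mem_ofPred_eq, Set.mem_univ, iff_true]; exact ⟨0, by simp [S]⟩

lemma GeN_zero (N : ℕ) (x : ℤ) : GeN N x 0 = Set.univ := by
  ext η; simp only [GeN, Set.mem_ofPred_eq, Set.mem_univ, iff_true]; exact ⟨0, by simp, by simp [S]⟩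

lemma Ge_anti (x : ℤ) {j k : ℕ} (h : j ≤ k) : Ge x k ⊆ Ge x j := by
  rintro η ⟨n, hn⟩; exact ⟨n, by have : (j : ℤ) ≤ k := by exact_mod_cast h
                                 linarith⟩

lemma GeN_succ_true {η : Cfg} {x : ℤ} (N k : ℕ) (h : η x = true) :
    η ∈ GeN (N + 1) x (k + 1) ↔ η ∈ GeN N (x - 1) k := by
  constructor
  · rintro ⟨n, hN, hn⟩
    cases n with
    | zero => simp [S] at hn; omega
    | succ n => simp only [S, h, if_true] at hn; exact ⟨n, by omega, by push_cast at hn; omega⟩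
  · rintro ⟨n, hN, hn⟩
    exact ⟨n + 1, by omega, by simp only [S, h, if_true]; push_cast; omega⟩

lemma GeN_succ_false {η : Cfg} {x : ℤ} (N k : ℕ) (h : η x = false) :
    η ∈ GeN (N + 1) x (k + 1) ↔ η ∈ GeN N (x - 1) (k + 2) := by
  constructor
  · rintro ⟨n, hN, hn⟩
    cases n with
    | zero => simp [S] at hn; omega
    | succ n => simp [S, h] at hn; exact ⟨n, by omega, by push_cast; omega⟩
  · rintro ⟨n, hN, hn⟩
    exact ⟨n + 1, by omega, by simp [S, h]; push_cast at hn; omega⟩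

lemma mem_Ge_iff {η : Cfg} {x : ℤ} {k : ℕ} : η ∈ Ge x k ↔ ∃ N, η ∈ GeN N x k :=
  ⟨fun ⟨n, hn⟩ => ⟨n, n, le_rfl, hn⟩, fun ⟨_, n, _, hn⟩ => ⟨n, hn⟩⟩

lemma Ge_succ_true {η : Cfg} {x : ℤ} (k : ℕ) (h : η x = true) :
    η ∈ Ge x (k + 1) ↔ η ∈ Ge (x - 1) k := by
  rw [mem_Ge_iff, mem_Ge_iff]
  constructor
  · rintro ⟨N, n, hN, hn⟩
    exact ⟨N, (GeN_succ_true N k h).1 ⟨n, by omega, hn⟩⟩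
  · rintro ⟨N, hN⟩
    exact ⟨N + 1, (GeN_succ_true N k h).2 hN⟩

lemma Ge_succ_false {η : Cfg} {x : ℤ} (k : ℕ) (h : η x = false) :
    η ∈ Ge x (k + 1) ↔ η ∈ Ge (x - 1) (k + 2) := by
  rw [mem_Ge_iff, mem_Ge_iff]
  constructor
  · rintro ⟨N, n, hN, hn⟩
    exact ⟨N, (GeN_succ_false N k h).1 ⟨n, by omega, hn⟩⟩
  · rintro ⟨N, hN⟩
    exact ⟨N + 1, (GeN_succ_false N k h).2 hN⟩

lemma isRecord_iff (η : Cfg) (x : ℤ) :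
    isRecord η x ↔ η x = false ∧ η ∉ Ge (x - 1) 1 := by
  have h1 : isRecord η x ↔ ∀ n : ℕ, S η (n + 1) x < 0 := by
    have aux : ∀ z, (∑ y ∈ Finset.Icc z x, valZ (η y)) - ∑ y ∈ Finset.Icc z x, (1 - valZ (η y))
        = ∑ y ∈ Finset.Icc z x, (2 * valZ (η y) - 1) := by
      intro z
      rw [← Finset.sum_sub_distrib]
      exact Finset.sum_congr rfl (fun y _ => by ring)
    constructor
    · intro h n
      have := h (x - ((n + 1 : ℕ) : ℤ) + 1) (by push_cast; omega)
      rw [S_eq, ← aux]; linarith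
    · intro h z hz
      have := h (x - z).toNat
      rw [S_eq, ← aux] at this
      have e : x - (((x - z).toNat + 1 : ℕ) : ℤ) + 1 = z := by push_cast; omega
      rw [e] at this; linarith
  rw [h1]
  constructor
  · intro h
    have hf : η x = false := by
      by_contra hc
      have := h 0
      simp only [Bool.not_eq_false] at hc
      simp [S, hc] at this
    refine ⟨hf, ?_⟩
    rintro ⟨n, hn⟩
    have := h n
    simp [S, hf] at this
    push_cast at hn; omega
  · rintro ⟨hf, hG⟩ n
    by_contra hc
    refine hG ⟨n, ?_⟩
    simp [S, hf] at hc
    push_cast; omega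

lemma bbsT_true_iff (η : Cfg) (x : ℤ) :
    bbsT η x = true ↔ η ∈ Ge (x - 1) 1 ∧ η x = false := by
  unfold bbsT
  split_ifs with h <;> rw [isRecord_iff] at h
  · simp [h.1, h.2]
  · cases hx : η x <;> simp_all

lemma bbsT_false_iff (η : Cfg) (x : ℤ) :
    bbsT η x = false ↔ (η x = true ∨ (η ∉ Ge (x - 1) 1 ∧ η x = false)) := by
  rw [← Bool.not_eq_true, bbsT_true_iff]
  cases hx : η x <;> simp

lemma meas_T (x : ℤ) (b : Bool) : MeasurableSet {η : Cfg | bbsT η x = b} := by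
  have ht : MeasurableSet {η : Cfg | bbsT η x = true} := by
    have : {η : Cfg | bbsT η x = true} = Ge (x - 1) 1 ∩ {η | η x = false} := by
      ext η; exact bbsT_true_iff η x
    rw [this]
    exact (meas_Ge _ _).inter (measurableSet_coord _ _)
  cases b
  · have : {η : Cfg | bbsT η x = false} = {η : Cfg | bbsT η x = true}ᶜ := by
      ext η; simp
    rw [this]; exact ht.compl
  · exact ht

lemma measurable_T : Measurable bbsT := by
  refine measurable_pi_lambda _ (fun x => ?_)
  refine measurable_to_countable' (fun b => meas_T x b)

lemma T_congr {η η' : Cfg} {x y : ℤ} (h : ∀ y ≤ x, η y = η' y) (hy : y ≤ x) :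
    bbsT η y = bbsT η' y := by
  have h2 : ∀ w ≤ y - 1, η w = η' w := fun w hw => h w (by omega)
  rw [Bool.eq_iff_iff, bbsT_true_iff, bbsT_true_iff, h y hy]
  exact and_congr ⟨past_Ge _ _ _ _ h2, past_Ge _ _ _ _ (fun w hw => (h2 w hw).symm)⟩ Iff.rfl

/-- Split on the value at `x`. -/
lemma split {lam : ℝ} (h0 : 0 < lam) (h1 : lam < 1 / 2)
    {ν : Measure Cfg} (hν : IsBernoulliProduct lam ν) (x : ℤ) {A B C : Set Cfg}
    (hB : MeasurableSet B) (hC : MeasurableSet C) (pB : Past (x - 1) B) (pC : Past (x - 1) C)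
    (ht : ∀ η : Cfg, η x = true → (η ∈ A ↔ η ∈ B))
    (hf : ∀ η : Cfg, η x = false → (η ∈ A ↔ η ∈ C)) :
    ν.real A = lam * ν.real B + (1 - lam) * ν.real C := by
  have := hν.1
  have e : A = {η | η ∈ B ∧ η x = true} ∪ {η | η ∈ C ∧ η x = false} := by
    ext η
    cases hx : η x
    · simp [hx, hf η hx]
    · simp [hx, ht η hx]
  rw [e, measureReal_union]
  · rw [indep h0 h1 hν x true hB pB, indep h0 h1 hν x false hC pC]
    simp [wt]
  · rw [Set.disjoint_left]
    rintro η ⟨_, h⟩ ⟨_, h'⟩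
    simp [h] at h'
  · exact hC.inter (measurableSet_coord x false)

/-- Law of the truncated carrier. -/
noncomputable def a (lam : ℝ) : ℕ → ℕ → ℝ
  | _, 0 => 1
  | 0, _ + 1 => 0
  | N + 1, k + 1 => lam * a lam N k + (1 - lam) * a lam N (k + 2)

lemma real_GeN {lam : ℝ} (h0 : 0 < lam) (h1 : lam < 1 / 2)
    {ν : Measure Cfg} (hν : IsBernoulliProduct lam ν) (N : ℕ) : ∀ (x : ℤ) (k : ℕ),
    ν.real (GeN N x k) = a lam N k := by
  have := hν.1
  induction N with
  | zero =>
    intro x k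
    cases k with
    | zero => rw [GeN_zero]; simp [a]
    | succ k =>
      have : GeN 0 x (k + 1) = ∅ := by
        ext η
        simp only [GeN, Set.mem_ofPred_eq, Set.mem_empty_iff_false, iff_false]
        rintro ⟨n, hn, h⟩
        obtain rfl : n = 0 := by omega
        simp [S] at h; omega
      rw [this]; simp [a]
  | succ N ih =>
    intro x k
    cases k with
    | zero => rw [GeN_zero]; simp [a]
    | succ k =>
      rw [split h0 h1 hν x (meas_GeN N (x - 1) k) (meas_GeN N (x - 1) (k + 2))
        (past_GeN _ _ _) (past_GeN _ _ _) (fun η h => GeN_succ_true N k h)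
        (fun η h => GeN_succ_false N k h), ih, ih, a]

lemma a_le {lam : ℝ} (h0 : 0 < lam) (h1 : lam < 1 / 2) (N : ℕ) : ∀ k : ℕ,
    a lam N k ≤ (lam / (1 - lam)) ^ k := by
  have hq : 0 < 1 - lam := by linarith
  set r := lam / (1 - lam) with hr
  have hr0 : 0 < r := div_pos h0 hq
  have hrq : (1 - lam) * r = lam := by rw [hr]; field_simp
  induction N with
  | zero => intro k; cases k <;> simp [a]; positivity
  | succ N ih =>
    intro k
    cases k with
    | zero => simp [a]
    | succ k =>
      rw [a]
      have e1 := mul_le_mul_of_nonneg_left (ih k) h0.le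
      have e2 := mul_le_mul_of_nonneg_left (ih (k + 2)) hq.le
      have e3 : lam * r ^ k + (1 - lam) * r ^ (k + 2) = r ^ (k + 1) := by
        have : lam * r ^ k + (1 - lam) * r ^ (k + 2) - r ^ (k + 1)
          = r ^ k * (1 - r) * (lam - (1 - lam) * r) := by ring
        rw [hrq] at this; linarith
      linarith

lemma real_Ge {lam : ℝ} (h0 : 0 < lam) (h1 : lam < 1 / 2)
    {ν : Measure Cfg} (hν : IsBernoulliProduct lam ν) (x : ℤ) (k : ℕ) :
    ν.real (Ge x k) = (lam / (1 - lam)) ^ k := by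
  have := hν.1
  have lim : ∀ (x : ℤ) (k : ℕ), Tendsto (fun N => a lam N k) atTop (nhds (ν.real (Ge x k))) := by
    intro x k
    have e : Ge x k = ⋃ N, GeN N x k := by ext η; simp [mem_Ge_iff]
    have mono : Monotone (fun N => GeN N x k) := by
      rintro N M h η ⟨n, hn, hh⟩; exact ⟨n, hn.trans h, hh⟩
    have := tendsto_measure_iUnion_atTop (μ := ν) mono
    rw [← e] at this
    have := (ENNReal.tendsto_toReal (measure_ne_top ν (Ge x k))).comp this
    refine this.congr (fun N => ?_)
    exact real_GeN h0 h1 hν N x k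
  have hq : 0 < 1 - lam := by linarith
  set r := lam / (1 - lam) with hr
  have hr0 : 0 < r := div_pos h0 hq
  have hr1 : r < 1 := by rw [hr, div_lt_one hq]; linarith
  have hrq : (1 - lam) * r = lam := by rw [hr]; field_simp
  obtain ⟨v, hv⟩ : ∃ v : ℕ → ℝ, ∀ x k, ν.real (Ge x k) = v k :=
    ⟨fun k => ν.real (Ge 0 k), fun x k => tendsto_nhds_unique (lim x k) (lim 0 k)⟩
  have v0 : v 0 = 1 := by rw [← hv 0 0, Ge_zero]; simp
  have vnn : ∀ k, 0 ≤ v k := fun k => by rw [← hv 0 k]; exact measureReal_nonneg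
  have vle : ∀ k, v k ≤ r ^ k := fun k => by
    rw [← hv 0 k]
    exact le_of_tendsto' (lim 0 k) (fun N => a_le h0 h1 N k)
  have vrec : ∀ k, v (k + 1) = lam * v k + (1 - lam) * v (k + 2) := fun k => by
    rw [← hv 0 (k + 1), ← hv (0 - 1) k, ← hv (0 - 1) (k + 2)]
    exact split h0 h1 hν 0 (meas_Ge _ _) (meas_Ge _ _) (past_Ge _ _) (past_Ge _ _)
      (fun η h => Ge_succ_true k h) (fun η h => Ge_succ_false k h)
  have vt : Tendsto v atTop (nhds 0) :=
    squeeze_zero vnn vle (tendsto_pow_atTop_nhds_zero_of_lt_one hr0.le hr1)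
  have cst : ∀ k, v (k + 1) - r * v k = v 1 - r * v 0 := by
    intro k
    induction k with
    | zero => rfl
    | succ k ih =>
      rw [← ih]
      have := vrec k
      have h3 : (1 - lam) * (v (k + 1 + 1) - r * v (k + 1)) =
          (1 - lam) * (v (k + 1) - r * v k) := by
        have e1 : (1 - lam) * (v (k + 1 + 1) - r * v (k + 1)) =
          (1 - lam) * v (k + 2) - ((1 - lam) * r) * v (k + 1) := by ring
        have e2 : (1 - lam) * (v (k + 1) - r * v k) =
          (1 - lam) * v (k + 1) - ((1 - lam) * r) * v k := by ring
        rw [e1, e2, hrq]; linarith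
      exact mul_left_cancel₀ hq.ne' h3
  have ct : Tendsto (fun k => v (k + 1) - r * v k) atTop (nhds (0 - r * 0)) :=
    ((tendsto_add_atTop_iff_nat 1).2 vt).sub (vt.const_mul r)
  simp only [cst] at ct
  have c0 : v 1 - r * v 0 = 0 - r * 0 := tendsto_nhds_unique tendsto_const_nhds ct
  rw [hv x k]
  induction k with
  | zero => simp [v0]
  | succ k ih =>
    have := cst k
    rw [c0] at this
    rw [pow_succ, ← ih]; linarith

/-- The past output event. -/
def Q (s : Finset ℤ) (f : ℤ → Bool) : Set Cfg := {η | ∀ y ∈ s, bbsT η y = f y}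

lemma meas_Q (s : Finset ℤ) (f : ℤ → Bool) : MeasurableSet (Q s f) :=
  measurable_T (measurableSet_cyl s f)

lemma past_Q {s : Finset ℤ} {f : ℤ → Bool} {x : ℤ} (h : ∀ y ∈ s, y ≤ x) : Past x (Q s f) := by
  intro η η' hh hη y hy
  rw [← T_congr hh (h y hy)]; exact hη y hy

lemma Past.inter {x : ℤ} {A B : Set Cfg} (hA : Past x A) (hB : Past x B) : Past x (A ∩ B) :=
  fun η η' h hη => ⟨hA η η' h hη.1, hB η η' h hη.2⟩

lemma Past.diff {x : ℤ} {A B : Set Cfg} (hA : Past x A) (hB : Past x B) : Past x (A \ B) :=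
  fun η η' h hη => ⟨hA η η' h hη.1, fun hc => hη.2 (hB η' η (fun y hy => (h y hy).symm) hc)⟩

lemma main {lam : ℝ} (h0 : 0 < lam) (h1 : lam < 1 / 2)
    {ν : Measure Cfg} (hν : IsBernoulliProduct lam ν) (f : ℤ → Bool) (s : Finset ℤ) :
    ∀ x : ℤ, (∀ y ∈ s, y ≤ x) → ∀ k : ℕ,
    ν.real (Ge x k ∩ Q s f) = (lam / (1 - lam)) ^ k * ∏ y ∈ s, wt lam (f y) := by
  have := hν.1
  have hq : 0 < 1 - lam := by linarith
  have hrq : (1 - lam) * (lam / (1 - lam)) = lam := by field_simp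
  induction s using Finset.induction_on_max with
  | empty =>
    intro x _ k
    have : Q ∅ f = Set.univ := by ext; simp [Q]
    rw [this, Set.inter_univ, real_Ge h0 h1 hν]; simp
  | insert b s hb ih =>
    have hbs : b ∉ s := fun h => lt_irrefl _ (hb b h)
    set r := lam / (1 - lam) with hr
    intro x hx
    have hbx : b ≤ x := hx b (Finset.mem_insert_self _ _)
    clear hx
    induction x, hbx using Int.le_induction with
    | base =>
      intro k
      have hle : ∀ y ∈ s, y ≤ b - 1 := fun y hy => by have := hb y hy; omega
      have IH := ih (b - 1) hle
      set P := ∏ y ∈ s, wt lam (f y) with hP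
      have mG : ∀ k, MeasurableSet (Ge (b - 1) k ∩ Q s f) := fun k =>
        (meas_Ge _ _).inter (meas_Q s f)
      have pG : ∀ k, Past (b - 1) (Ge (b - 1) k ∩ Q s f) := fun k =>
        (past_Ge _ _).inter (past_Q hle)
      have pE : Past (b - 1) ∅ := fun _ _ _ h => h
      rw [Finset.prod_insert hbs, ← hP]
      have hQ : ∀ η : Cfg, η ∈ Q (insert b s) f ↔ bbsT η b = f b ∧ η ∈ Q s f := fun η => by
        simp [Q]
      cases hfb : f b
      · cases k with
        | zero =>
          rw [split h0 h1 hν b (A := Ge b 0 ∩ Q (insert b s) f) (B := Ge (b - 1) 0 ∩ Q s f)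
            (C := (Ge (b - 1) 0 ∩ Q s f) \ (Ge (b - 1) 1 ∩ Q s f))
            (mG 0) ((mG 0).diff (mG 1)) (pG 0) ((pG 0).diff (pG 1))]
          · rw [measureReal_sdiff (Set.inter_subset_inter_left _ (Ge_anti _ (by omega))) (mG 1),
              IH, IH]
            simp only [wt, Bool.false_eq_true, if_false]
            have : lam * (r ^ 0 * P) + (1 - lam) * (r ^ 0 * P - r ^ 1 * P)
              = P * (1 - (1 - lam) * r) := by ring
            rw [this, hrq]; ring
          · intro η h
            rw [Set.mem_inter_iff, hQ, hfb, bbsT_false_iff, Ge_zero, Ge_zero]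
            simp [h]
          · intro η h
            rw [Set.mem_inter_iff, hQ, hfb, bbsT_false_iff, Ge_zero, Ge_zero]
            simp only [h, Set.mem_sdiff, Set.mem_inter_iff, Set.mem_univ]
            simp
            tauto
        | succ k =>
          rw [split h0 h1 hν b (A := Ge b (k + 1) ∩ Q (insert b s) f)
            (B := Ge (b - 1) k ∩ Q s f) (C := ∅) (mG k) MeasurableSet.empty (pG k) pE]
          · rw [IH]
            simp only [wt, Bool.false_eq_true, if_false, measureReal_empty]
            have : r ^ (k + 1) * ((1 - lam) * P) = ((1 - lam) * r) * (r ^ k * P) := by ring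
            rw [this, hrq]; ring
          · intro η h
            rw [Set.mem_inter_iff, hQ, hfb, bbsT_false_iff, Ge_succ_true k h]
            simp [h]
          · intro η h
            rw [Set.mem_inter_iff, hQ, hfb, bbsT_false_iff, Ge_succ_false k h]
            simp only [h, Set.mem_empty_iff_false, iff_false]
            rintro ⟨hk, hh, _⟩
            have := Ge_anti (b - 1) (show 1 ≤ k + 2 by omega) hk
            simp [this] at hh
      · rw [split h0 h1 hν b (A := Ge b k ∩ Q (insert b s) f)
            (B := ∅) (C := Ge (b - 1) (k + 1) ∩ Q s f) MeasurableSet.empty (mG _) pE (pG _)]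
        · rw [IH]
          simp only [wt, if_true, measureReal_empty]
          have : (1 - lam) * (r ^ (k + 1) * P) = ((1 - lam) * r) * (r ^ k * P) := by ring
          rw [this, hrq]; ring
        · intro η h
          rw [Set.mem_inter_iff, hQ, hfb, bbsT_true_iff]
          simp [h]
        · intro η h
          rw [Set.mem_inter_iff, hQ, hfb, bbsT_true_iff, Set.mem_inter_iff]
          cases k with
          | zero => rw [Ge_zero]; simp [h]
          | succ k =>
            rw [Ge_succ_false k h]
            have : η ∈ Ge (b - 1) (k + 2) → η ∈ Ge (b - 1) 1 :=
              fun hk => Ge_anti (b - 1) (show 1 ≤ k + 2 by omega) hk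
            simp only [h]
            tauto
    | succ x hbx IH =>
      intro k
      cases k with
      | zero =>
        have := IH 0
        rw [Ge_zero] at this ⊢
        exact this
      | succ k =>
        have hle : ∀ y ∈ insert b s, y ≤ x + 1 - 1 := by
          intro y hy
          rcases Finset.mem_insert.1 hy with rfl | hy
          · omega
          · have := hb y hy; omega
        have ex : x + 1 - 1 = x := by ring
        rw [split h0 h1 hν (x + 1) (A := Ge (x + 1) (k + 1) ∩ Q (insert b s) f)
          (B := Ge (x + 1 - 1) k ∩ Q (insert b s) f)
          (C := Ge (x + 1 - 1) (k + 2) ∩ Q (insert b s) f)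
          ((meas_Ge _ _).inter (meas_Q _ f)) ((meas_Ge _ _).inter (meas_Q _ f))
          ((past_Ge _ _).inter (past_Q hle)) ((past_Ge _ _).inter (past_Q hle))]
        · rw [ex, IH, IH]
          generalize ∏ y ∈ insert b s, wt lam (f y) = P
          have : lam * (r ^ k * P) + (1 - lam) * (r ^ (k + 2) * P) - r ^ (k + 1) * P
            = P * r ^ k * (1 - r) * (lam - (1 - lam) * r) := by ring
          rw [hrq] at this; linarith
        · intro η h
          rw [Set.mem_inter_iff, Ge_succ_true k h]; rfl
        · intro η h
          rw [Set.mem_inter_iff, Ge_succ_false k h]; rfl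

end BBS

/-- For `0 < lam < 1/2`, the Bernoulli(`lam`) product measure
`ν_lam = Bernoulli(lam)^{⊗ℤ}` is invariant under the box-ball operator `T`:
the pushforward of `ν_lam` under `T` equals `ν_lam`. -/
theorem bernoulli_product_T_invariant (lam : ℝ) (h0 : 0 < lam) (h1 : lam < 1 / 2)
    (ν : MeasureTheory.Measure Cfg) (hν : IsBernoulliProduct lam ν) :
    ν.map bbsT = ν := by
  have := hν.1
  have : IsProbabilityMeasure (ν.map bbsT) :=
    Measure.isProbabilityMeasure_map BBS.measurable_T.aemeasurable
  refine BBS.ext_cyl _ _ (fun s f => ?_)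
  rw [Measure.map_apply BBS.measurable_T (BBS.measurableSet_cyl s f)]
  obtain ⟨x, hx⟩ : ∃ x : ℤ, ∀ y ∈ s, y ≤ x := s.bddAbove
  have h := BBS.main h0 h1 hν f s x hx 0
  rw [BBS.Ge_zero, Set.univ_inter, pow_zero, one_mul, ← BBS.cyl_real h0 h1 hν] at h
  rw [measureReal_def, measureReal_def] at h
  exact (ENNReal.toReal_eq_toReal_iff' (measure_ne_top _ _) (measure_ne_top _ _)).1 h
end

section
/- Let (η(x))_{x∈ℤ} be i.i.d. Bernoulli(λ) random variables with 0 < λ < 1/2, and let ξ be the walk lift of η with ξ(0) = 0. Then almost surely min_{y≤x} ξ(y) > −∞ for every x, and the reflected process W(x) := ξ(x) − min_{y≤x} ξ(y) satisfies, for every x ∈ ℤ and every integer k ≥ 0, P(W(x) ≥ k) = (λ/(1−λ))^k; that is, W(x) is geometrically distributed with ratio λ/(1−λ). -/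
open MeasureTheory Filter Finset

lemma xi0_lift (η : Cfg) (x : ℤ) : xi0 η x - xi0 η (x - 1) = 2 * valZ (η x) - 1 := by
  unfold xi0
  rcases lt_trichotomy x 0 with h | h | h
  · rw [if_neg (by omega), if_neg (by omega)]
    have : Finset.Icc (x - 1 + 1) 0 = insert x (Finset.Icc (x + 1) 0) := by
      ext y; simp only [Finset.mem_Icc, Finset.mem_insert]; omega
    rw [this, Finset.sum_insert (by simp)]; ring
  · subst h
    simp
  · rw [if_pos (by omega), if_pos (by omega)]
    have : Finset.Icc 1 x = insert x (Finset.Icc 1 (x - 1)) := by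
      ext y; simp only [Finset.mem_Icc, Finset.mem_insert]; omega
    rw [this, Finset.sum_insert (by simp)]; ring

/-- Finite-horizon reflected walk. -/
def hor (η : Cfg) : ℕ → ℤ → ℕ
  | 0, _ => 0
  | n + 1, x => if η x = true then hor η n (x - 1) + 1 else hor η n (x - 1) - 1

lemma le_hor_iff (η : Cfg) (n : ℕ) : ∀ (x : ℤ) (k : ℕ), k ≤ hor η n x ↔
    ∃ j : ℕ, j ≤ n ∧ (k : ℤ) ≤ xi0 η x - xi0 η (x - j) := by
  induction n with
  | zero =>
    intro x k
    simp [hor]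
  | succ n ih =>
    intro x k
    rcases k with _ | k
    · simp only [Nat.zero_le, true_iff]
      exact ⟨0, by omega, by simp⟩
    have hl := xi0_lift η x
    have key : (∃ j : ℕ, j ≤ n + 1 ∧ ((k + 1 : ℕ) : ℤ) ≤ xi0 η x - xi0 η (x - j)) ↔
        ∃ j : ℕ, j ≤ n ∧ ((k + 1 : ℕ) : ℤ) ≤ xi0 η x - xi0 η (x - 1 - j) := by
      constructor
      · rintro ⟨j, hj, h⟩
        rcases j with _ | j
        · simp at h; omega
        · refine ⟨j, by omega, ?_⟩
          rwa [show x - 1 - (j : ℤ) = x - ((j + 1 : ℕ) : ℤ) by push_cast; ring]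
      · rintro ⟨j, hj, h⟩
        refine ⟨j + 1, by omega, ?_⟩
        rwa [show x - 1 - (j : ℤ) = x - ((j + 1 : ℕ) : ℤ) by push_cast; ring] at h
    rw [key]
    by_cases hx : η x = true
    · have e : k + 1 ≤ hor η (n + 1) x ↔ k ≤ hor η n (x - 1) := by simp [hor, hx]
      rw [e, ih]
      simp only [valZ, hx, if_true] at hl
      refine exists_congr fun j => and_congr_right fun _ => ?_
      push_cast; constructor <;> intro h <;> linarith
    · have e : k + 1 ≤ hor η (n + 1) x ↔ k + 2 ≤ hor η n (x - 1) := by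
        simp only [hor, hx]; simp; omega
      rw [e, ih]
      simp only [valZ, hx] at hl
      refine exists_congr fun j => and_congr_right fun _ => ?_
      push_cast; simp at hl; constructor <;> intro h <;> linarith

lemma hor_meas {Ω : Type*} (m : MeasurableSpace Ω) (η : Ω → Cfg) (n : ℕ) : ∀ (x : ℤ),
    (∀ y ≤ x, Measurable[m] fun ω => η ω y) → Measurable[m] fun ω => hor (η ω) n x := by
  induction n with
  | zero => intro x _; exact measurable_const
  | succ n ih =>
    intro x h
    have h1 := ih (x - 1) fun y hy => h y (by omega)
    have h2 : MeasurableSet[m] {ω | η ω x = true} := h x le_rfl (measurableSet_singleton true)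
    have h3 : Measurable (fun a : ℕ => a + 1) := measurable_from_top
    have h4 : Measurable (fun a : ℕ => a - 1) := measurable_from_top
    exact Measurable.ite h2 (h3.comp h1) (h4.comp h1)

/-- Tail probabilities of the finite-horizon reflected walk. -/
noncomputable def tailG (lam : ℝ) : ℕ → ℕ → ℝ
  | _, 0 => 1
  | 0, _ + 1 => 0
  | n + 1, k + 1 => lam * tailG lam n k + (1 - lam) * tailG lam n (k + 2)

lemma tailG_le (lam : ℝ) (h0 : 0 < lam) (h1 : lam < 1 / 2) (n : ℕ) :
    ∀ k, tailG lam n k ≤ (lam / (1 - lam)) ^ k := by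
  have hp : 0 < 1 - lam := by linarith
  have hr : 0 < lam / (1 - lam) := by positivity
  have hl : lam = (1 - lam) * (lam / (1 - lam)) := by field_simp
  set r := lam / (1 - lam) with hrdef
  induction n with
  | zero =>
    intro k
    rcases k with _ | k
    · simp [tailG]
    · simp only [tailG]; positivity
  | succ n ih =>
    intro k
    rcases k with _ | k
    · simp [tailG]
    · simp only [tailG]
      calc _ ≤ lam * r ^ k + (1 - lam) * r ^ (k + 2) := by
            gcongr
            · exact ih k
            · exact ih (k + 2)
        _ = r ^ (k + 1) := by
            have : r * (1 - lam) = lam := by linarith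
            linear_combination (-(r ^ k) + r ^ (k + 1)) * this

lemma harmonic_unique (lam : ℝ) (h0 : 0 < lam) (h1 : lam < 1 / 2) (F : ℕ → ℝ)
    (hF0 : F 0 = 1) (hrec : ∀ k, F (k + 1) = lam * F k + (1 - lam) * F (k + 2))
    (hle : ∀ k, F k ≤ (lam / (1 - lam)) ^ k) (hnn : ∀ k, 0 ≤ F k) (k : ℕ) :
    F k = (lam / (1 - lam)) ^ k := by
  have hp : 0 < 1 - lam := by linarith
  have hr : 0 < lam / (1 - lam) := by positivity
  have hr1 : lam / (1 - lam) < 1 := by rw [div_lt_one hp]; linarith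
  have hl : lam / (1 - lam) * (1 - lam) = lam := by field_simp
  set r := lam / (1 - lam) with hrdef
  have hc : ∀ k, F (k + 1) - r * F k = F 1 - r := by
    intro k
    induction k with
    | zero => simp [hF0]
    | succ k ih =>
      rw [← ih]
      have := hrec k
      have h3 : (1 - lam) * (F (k + 2) - r * F (k + 1) - (F (k + 1) - r * F k)) = 0 := by
        linear_combination -this + (F k - F (k + 1)) * hl
      rcases mul_eq_zero.1 h3 with h | h
      · linarith
      · linarith
  have ht : Tendsto F atTop (nhds 0) :=
    squeeze_zero hnn hle (tendsto_pow_atTop_nhds_zero_of_lt_one hr.le hr1)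
  have ht2 : Tendsto (fun k => F (k + 1) - r * F k) atTop (nhds (0 - r * 0)) :=
    ((tendsto_add_atTop_iff_nat 1).2 ht).sub (ht.const_mul r)
  have hz : F 1 - r = 0 := by
    have := tendsto_nhds_unique ht2 (by simp only [hc]; exact tendsto_const_nhds)
    linarith
  induction k with
  | zero => simp [hF0]
  | succ k ih => rw [pow_succ, ← ih]; linarith [hc k]

open MeasureTheory ProbabilityTheory in
lemma hor_tail {Ω : Type*} [MeasurableSpace Ω]
    (P : Measure Ω) [IsProbabilityMeasure P] (lam : ℝ) (h0 : 0 < lam)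
    (η : Ω → Cfg) (hmeas : ∀ x : ℤ, Measurable fun ω => η ω x)
    (hindep : iIndepFun (fun x ω => η ω x) P)
    (hber : ∀ x : ℤ, P {ω | η ω x = true} = ENNReal.ofReal lam) (n : ℕ) :
    ∀ (x : ℤ) (k : ℕ), P.real {ω | k ≤ hor (η ω) n x} = tailG lam n k := by
  induction n with
  | zero =>
    intro x k
    rcases k with _ | k
    · simp [hor, tailG]
    · simp [hor, tailG]
  | succ n ih =>
    intro x k
    rcases k with _ | k
    · simp [tailG]
    set A : Set Ω := {ω | η ω x = true} with hA
    have hAm : MeasurableSet A := hmeas x (measurableSet_singleton true)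
    have hPA : P.real A = lam := by
      rw [measureReal_def, hber x, ENNReal.toReal_ofReal h0.le]
    have hPAc : P.real Aᶜ = 1 - lam := by rw [probReal_compl_eq_one_sub hAm, hPA]
    let m : ℤ → MeasurableSpace Ω := fun y => MeasurableSpace.comap (fun ω => η ω y) inferInstance
    have hm : ∀ y, m y ≤ ‹MeasurableSpace Ω› := fun y => (hmeas y).comap_le
    have hI : Indep (⨆ i ∈ ({x} : Set ℤ), m i) (⨆ i ∈ Set.Iio x, m i) P :=
      indep_iSup_of_disjoint hm hindep (by simp)
    have hB : ∀ j : ℕ, MeasurableSet[⨆ i ∈ Set.Iio x, m i] {ω | j ≤ hor (η ω) n (x - 1)} := by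
      intro j
      have := hor_meas (⨆ i ∈ Set.Iio x, m i) η n (x - 1) (fun y hy => by
        have : m y ≤ ⨆ i ∈ Set.Iio x, m i :=
          le_iSup₂_of_le y (by simp; omega) le_rfl
        exact (comap_measurable (fun ω => η ω y)).mono this le_rfl)
      exact this (measurableSet_Ici (a := j))
    have hA' : MeasurableSet[⨆ i ∈ ({x} : Set ℤ), m i] A := by
      have : m x ≤ ⨆ i ∈ ({x} : Set ℤ), m i := le_iSup₂_of_le x (by simp) le_rfl
      exact this _ ⟨{true}, measurableSet_singleton true, rfl⟩
    have hind : ∀ C, MeasurableSet[⨆ i ∈ ({x} : Set ℤ), m i] C → ∀ j : ℕ,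
        P.real (C ∩ {ω | j ≤ hor (η ω) n (x - 1)}) = P.real C * tailG lam n j := by
      intro C hC j
      rw [← ih (x - 1) j, measureReal_def, (Indep_iff _ _ _).1 hI _ _ hC (hB j), ENNReal.toReal_mul]
      rfl
    have e1 : {ω | k + 1 ≤ hor (η ω) (n + 1) x} ∩ A = A ∩ {ω | k ≤ hor (η ω) n (x - 1)} := by
      ext ω
      by_cases h : η ω x = true <;> simp [hor, hA, h]
    have e2 : {ω | k + 1 ≤ hor (η ω) (n + 1) x} \ A = Aᶜ ∩ {ω | k + 2 ≤ hor (η ω) n (x - 1)} := by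
      ext ω
      by_cases h : η ω x = true <;> simp [hor, hA, h]
      omega
    rw [← measureReal_inter_add_sdiff (s := {ω | k + 1 ≤ hor (η ω) (n + 1) x}) hAm, e1, e2, hind _ hA', hind _ hA'.compl, hPA, hPAc]
    simp [tailG]

open MeasureTheory ProbabilityTheory in
lemma sup_tail {Ω : Type*} [MeasurableSpace Ω]
    (P : Measure Ω) [IsProbabilityMeasure P] (lam : ℝ) (h0 : 0 < lam) (h1 : lam < 1 / 2)
    (η : Ω → Cfg) (hmeas : ∀ x : ℤ, Measurable fun ω => η ω x)
    (hindep : iIndepFun (fun x ω => η ω x) P)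
    (hber : ∀ x : ℤ, P {ω | η ω x = true} = ENNReal.ofReal lam) (x : ℤ) (k : ℕ) :
    P {ω | ∃ j : ℕ, (k : ℤ) ≤ xi0 (η ω) x - xi0 (η ω) (x - j)} =
      ENNReal.ofReal ((lam / (1 - lam)) ^ k) := by
  let E : ℕ → Set Ω := fun k => ⋃ n, {ω | k ≤ hor (η ω) n x}
  have hE : {ω | ∃ j : ℕ, (k : ℤ) ≤ xi0 (η ω) x - xi0 (η ω) (x - j)} = E k := by
    ext ω
    simp only [E, Set.mem_iUnion, Set.mem_ofPred_eq, le_hor_iff]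
    exact ⟨fun ⟨j, h⟩ => ⟨j, j, le_rfl, h⟩, fun ⟨_, j, _, h⟩ => ⟨j, h⟩⟩
  have hmono : ∀ k, Monotone fun n => {ω | k ≤ hor (η ω) n x} := by
    intro k a b hab ω h
    simp only [Set.mem_ofPred_eq, le_hor_iff] at h ⊢
    obtain ⟨j, hj, h⟩ := h
    exact ⟨j, hj.trans hab, h⟩
  have hlim : ∀ k, Tendsto (fun n => tailG lam n k) atTop (nhds (P.real (E k))) := by
    intro k
    have := tendsto_measure_iUnion_atTop (μ := P) (hmono k)
    have := (ENNReal.tendsto_toReal (measure_ne_top P (E k))).comp this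
    refine this.congr fun n => ?_
    exact hor_tail P lam h0 η hmeas hindep hber n x k
  have hu := harmonic_unique lam h0 h1 (fun k => P.real (E k)) (by simp [E, Set.iUnion_const])
    (fun k => by
      refine tendsto_nhds_unique ((tendsto_add_atTop_iff_nat 1).2 (hlim (k + 1))) ?_
      simp only [tailG]
      exact ((hlim k).const_mul _).add ((hlim (k + 2)).const_mul _))
    (fun k => le_of_tendsto' (hlim k) fun n => tailG_le lam h0 h1 n k)
    (fun k => measureReal_nonneg) k
  rw [hE, ← hu, ofReal_measureReal]

open MeasureTheory ProbabilityTheory in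
/-- Let `(η(x))_{x∈ℤ}` be i.i.d. Bernoulli(`lam`) with
`0 < lam < 1/2` and let `ξ` be the walk lift of `η` with `ξ(0) = 0`.  Then
almost surely `min_{y≤x} ξ(y) > −∞` for every `x`, and the reflected process
`W(x) = ξ(x) − min_{y≤x} ξ(y)` satisfies `P(W(x) ≥ k) = (lam/(1−lam))^k` for
every `x ∈ ℤ` and integer `k ≥ 0`: `W(x)` is geometric with ratio
`lam/(1−lam)`. -/
theorem reflected_walk_geometric {Ω : Type*} [MeasurableSpace Ω]
    (P : Measure Ω) [IsProbabilityMeasure P] (lam : ℝ) (h0 : 0 < lam)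
    (h1 : lam < 1 / 2) (η : Ω → Cfg) (hmeas : ∀ x : ℤ, Measurable fun ω => η ω x)
    (hindep : iIndepFun (fun x ω => η ω x) P)
    (hber : ∀ x : ℤ, P {ω | η ω x = true} = ENNReal.ofReal lam) :
    (∀ᵐ ω ∂P, ∀ x : ℤ, BddBelow (xi0 (η ω) '' Set.Iic x)) ∧
    ∀ (x : ℤ) (k : ℕ),
      P {ω | (k : ℤ) ≤ xi0 (η ω) x - runMin (xi0 (η ω)) x} =
        ENNReal.ofReal ((lam / (1 - lam)) ^ k) := by
  have hp : 0 < 1 - lam := by linarith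
  have hr : 0 < lam / (1 - lam) := by positivity
  have hr1 : lam / (1 - lam) < 1 := by rw [div_lt_one hp]; linarith
  have hT := sup_tail P lam h0 h1 η hmeas hindep hber
  have hb : ∀ᵐ ω ∂P, ∀ x : ℤ, BddBelow (xi0 (η ω) '' Set.Iic x) := by
    rw [ae_all_iff]
    intro x
    have ht : Tendsto (fun k : ℕ => ENNReal.ofReal ((lam / (1 - lam)) ^ k)) atTop (nhds 0) := by
      have := ENNReal.tendsto_ofReal (tendsto_pow_atTop_nhds_zero_of_lt_one hr.le hr1)
      simpa using this
    refine le_antisymm (ge_of_tendsto' ht fun k => ?_) zero_le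
    rw [← hT x k]
    refine measure_mono fun ω hω => ?_
    by_contra hcon
    apply hω
    simp only [Set.mem_ofPred_eq, not_exists, not_le] at hcon
    refine ⟨xi0 (η ω) x - k, ?_⟩
    rintro _ ⟨y, hy, rfl⟩
    have h := hcon (x - y).toNat
    have hy' : y ≤ x := hy
    rw [Int.toNat_of_nonneg (by omega), sub_sub_cancel] at h
    omega
  refine ⟨hb, fun x k => ?_⟩
  rw [← hT x k]
  apply measure_congr
  filter_upwards [hb] with ω hω
  apply propext
  change (k : ℤ) ≤ xi0 (η ω) x - runMin (xi0 (η ω)) x ↔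
    ∃ j : ℕ, (k : ℤ) ≤ xi0 (η ω) x - xi0 (η ω) (x - j)
  constructor
  · intro h
    obtain ⟨y, hy, e⟩ := Int.csInf_mem (s := xi0 (η ω) '' Set.Iic x)
      ⟨_, x, Set.mem_Iic.2 le_rfl, rfl⟩ (hω x)
    have hy' : y ≤ x := hy
    refine ⟨(x - y).toNat, ?_⟩
    rw [Int.toNat_of_nonneg (by omega), sub_sub_cancel, e]
    exact h
  · rintro ⟨j, h⟩
    have : runMin (xi0 (η ω)) x ≤ xi0 (η ω) (x - j) :=
      csInf_le (hω x) ⟨x - j, by simp, rfl⟩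
    omega
end

section
/- Let (η(x))_{x∈ℤ} be i.i.d. Bernoulli(λ) random variables with 0 < λ < 1/2, let ξ be the walk lift of η with ξ(0) = 0, and let W(x) := ξ(x) − min_{y≤x} ξ(y). Then the process W is reversible: (W(x))_{x∈ℤ} has the same law as the time reversal (W(−x))_{x∈ℤ}. -/
open MeasureTheory Filter Finset

namespace RW
open MeasureTheory ProbabilityTheory

/-- step -/
def st (b : Bool) : ℤ := 2 * valZ b - 1

lemma st_true : st true = 1 := by simp [st, valZ]
lemma st_false : st false = -1 := by simp [st, valZ]

/-- backward partial sums -/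
def S (e : ℤ → Bool) (x : ℤ) (n : ℕ) : ℤ := ∑ i ∈ Finset.range n, st (e (x - i))

/-- reflected walk -/
noncomputable def V (e : ℤ → Bool) (x : ℤ) : ℤ := ⨆ n, S e x n

def Good (e : ℤ → Bool) : Prop := ∀ x, BddAbove (Set.range (S e x))

lemma S_succ (e : ℤ → Bool) (x : ℤ) (n : ℕ) : S e (x+1) (n+1) = st (e (x+1)) + S e x n := by
  unfold S
  rw [Finset.sum_range_succ', add_comm]
  congr 1
  · simp
  · refine Finset.sum_congr rfl fun i _ => ?_
    congr 2; push_cast; ring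

lemma V_nonneg {e : ℤ → Bool} (h : Good e) (x : ℤ) : 0 ≤ V e x :=
  le_ciSup (h x) 0

lemma V_succ {e : ℤ → Bool} (h : Good e) (x : ℤ) : V e (x+1) = max 0 (V e x + st (e (x+1))) := by
  apply le_antisymm
  · refine ciSup_le fun n => ?_
    cases n with
    | zero => simp [S]
    | succ n =>
      rw [S_succ]
      have : S e x n ≤ V e x := le_ciSup (h x) n
      exact le_max_of_le_right (by linarith)
  · refine max_le (V_nonneg h _) ?_
    rw [← le_sub_iff_add_le]
    refine ciSup_le fun n => ?_
    have : S e (x+1) (n+1) ≤ V e (x+1) := le_ciSup (h (x+1)) (n+1)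
    rw [S_succ] at this
    linarith

lemma xi0_step (e : ℤ → Bool) (x : ℤ) : xi0 e x - xi0 e (x-1) = st (e x) := by
  unfold xi0
  change (if 0 ≤ x then ∑ y ∈ Finset.Icc 1 x, st (e y) else -∑ y ∈ Finset.Icc (x+1) 0, st (e y)) -
    (if 0 ≤ x - 1 then ∑ y ∈ Finset.Icc 1 (x-1), st (e y)
      else -∑ y ∈ Finset.Icc (x-1+1) 0, st (e y)) = _
  rcases lt_trichotomy x 0 with hx | rfl | hx
  · rw [if_neg (by lia), if_neg (by lia)]
    have : Finset.Icc (x-1+1) 0 = insert x (Finset.Icc (x+1) 0) := by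
      ext y; simp only [Finset.mem_Icc, Finset.mem_insert]; lia
    rw [this, Finset.sum_insert (by simp)]; ring
  · simp
  · rw [if_pos (by lia), if_pos (by lia)]
    have : Finset.Icc 1 x = insert x (Finset.Icc 1 (x-1)) := by
      ext y; simp only [Finset.mem_Icc, Finset.mem_insert]; lia
    rw [this, Finset.sum_insert (by simp)]; ring

lemma xi0_S (e : ℤ → Bool) (x : ℤ) (n : ℕ) : xi0 e (x - n) = xi0 e x - S e x n := by
  induction n with
  | zero => simp [S]
  | succ n ih =>
    have h := xi0_step e (x - n)
    unfold S at *
    rw [Finset.sum_range_succ]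
    have : x - ((n+1 : ℕ) : ℤ) = x - n - 1 := by push_cast; ring
    rw [this]; linarith

lemma W_eq {e : ℤ → Bool} (h : Good e) (x : ℤ) : xi0 e x - runMin (xi0 e) x = V e x := by
  have hl : IsLeast (xi0 e '' Set.Iic x) (xi0 e x - V e x) := by
    constructor
    · have : V e x ∈ Set.range (S e x) := Int.csSup_mem (Set.range_nonempty _) (h x)
      obtain ⟨n, hn⟩ := this
      exact ⟨x - n, by simp, by rw [xi0_S, hn]⟩
    · rintro _ ⟨y, hy, rfl⟩
      have hy' : y ≤ x := hy
      obtain ⟨n, hn⟩ := Int.eq_ofNat_of_zero_le (show 0 ≤ x - y by lia)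
      have : y = x - n := by lia
      rw [this, xi0_S]
      have : S e x n ≤ V e x := le_ciSup (h x) n
      linarith
  have : runMin (xi0 e) x = xi0 e x - V e x := by
    unfold runMin
    exact hl.csInf_eq
  rw [this]; ring

/-- transition probabilities -/
noncomputable def pp (lam : ℝ) (k l : ℤ) : ℝ :=
  (if l = max 0 (k+1) then lam else 0) + (if l = max 0 (k-1) then 1 - lam else 0)

lemma db_of (lam : ℝ) (p : ℤ → ℝ) (hneg : ∀ k < 0, p k = 0)
    (hst : ∀ k, 0 ≤ k → p k = p (max 0 (k-1)) * pp lam (max 0 (k-1)) k + p (k+1) * pp lam (k+1) k)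
    (k l : ℤ) : p k * pp lam k l = p l * pp lam l k := by
  have key : ∀ n : ℕ, p n * lam = p (n+1) * (1 - lam) := by
    intro n
    induction n with
    | zero =>
      have := hst 0 le_rfl
      simp [pp] at this ⊢
      linarith
    | succ n ih =>
      have := hst (n+1) (by lia)
      have e1 : max (0:ℤ) ((n:ℤ)+1-1) = n := by lia
      rw [e1] at this
      have e2 : pp lam n (n+1) = lam := by
        unfold pp; rw [if_pos (by lia), if_neg (by lia)]; ring
      have e3 : pp lam (n+1+1) (n+1) = 1 - lam := by
        unfold pp; rw [if_neg (by lia), if_pos (by lia)]; ring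
      rw [e2, e3] at this
      push_cast
      linarith
  have key' : ∀ n : ℤ, 0 ≤ n → p n * lam = p (n+1) * (1 - lam) := by
    intro n hn
    obtain ⟨m, rfl⟩ := Int.eq_ofNat_of_zero_le hn
    exact key m
  have up : ∀ k l : ℤ, 0 ≤ k → k < l → p k * pp lam k l = p l * pp lam l k := by
    intro k l hk hkl
    by_cases h : l = k + 1
    · subst h
      unfold pp
      rw [if_pos (by lia), if_neg (by lia), if_neg (by lia), if_pos (by lia)]
      simpa using key' k hk
    · unfold pp
      rw [if_neg (by lia), if_neg (by lia), if_neg (by lia), if_neg (by lia)]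
      simp
  have neg : ∀ k l : ℤ, k < 0 → p k * pp lam k l = p l * pp lam l k := by
    intro k l hk
    rw [hneg k hk]; unfold pp
    rw [if_neg (by lia : ¬ k = max 0 (l+1)), if_neg (by lia : ¬ k = max 0 (l-1))]
    simp
  rcases lt_or_ge k 0 with hk | hk
  · exact neg k l hk
  rcases lt_or_ge l 0 with hl | hl
  · exact (neg l k hl).symm
  rcases lt_trichotomy k l with h | rfl | h
  · exact up k l hk h
  · rfl
  · exact (up l k hl h).symm

lemma path_rev (lam : ℝ) (p : ℤ → ℝ) (hdb : ∀ k l, p k * pp lam k l = p l * pp lam l k)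
    (w : ℕ → ℤ) (n : ℕ) :
    p (w 0) * ∏ i ∈ Finset.range n, pp lam (w i) (w (i+1)) =
      p (w n) * ∏ i ∈ Finset.range n, pp lam (w (n - i)) (w (n - (i+1))) := by
  have h1 : p (w 0) * ∏ i ∈ Finset.range n, pp lam (w i) (w (i+1)) =
      p (w n) * ∏ i ∈ Finset.range n, pp lam (w (i+1)) (w i) := by
    induction n with
    | zero => simp
    | succ n ih =>
      rw [Finset.prod_range_succ, Finset.prod_range_succ, ← mul_assoc, ih, mul_right_comm, hdb]
      ring
  rw [h1, ← Finset.prod_range_reflect]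
  congr 1
  refine Finset.prod_congr rfl fun i hi => ?_
  have := Finset.mem_range.1 hi
  congr 2 <;> lia

section prob
variable {Ω : Type*} [MeasurableSpace Ω] {P : Measure Ω} [IsProbabilityMeasure P] {lam : ℝ}
  {η : Ω → Cfg}

/-- sigma-algebra of the past -/
def past (η : Ω → Cfg) (x : ℤ) : MeasurableSpace Ω :=
  ⨆ i ∈ Set.Iic x, MeasurableSpace.comap (fun ω => η ω i) inferInstance

lemma past_mono {x y : ℤ} (h : x ≤ y) : past η x ≤ past η y :=
  biSup_mono fun _ hi => le_trans hi h

lemma past_le (hmeas : ∀ x : ℤ, Measurable fun ω => η ω x) (x : ℤ) :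
    past η x ≤ (inferInstance : MeasurableSpace Ω) :=
  iSup₂_le fun i _ => (hmeas i).comap_le

lemma meas_S (x : ℤ) (n : ℕ) : Measurable[past η x] fun ω => S (η ω) x n := by
  unfold S
  refine Finset.measurable_sum _ fun i _ => ?_
  have h : Measurable[past η x] fun ω => η ω (x - i) := by
    refine Measurable.mono (comap_measurable _) ?_ le_rfl
    exact le_iSup₂_of_le (x - (i:ℤ)) (by simp) le_rfl
  exact (measurable_of_countable st).comp h

lemma meas_V (x : ℤ) : Measurable[past η x] fun ω => V (η ω) x := by
  unfold V
  exact Measurable.iSup fun n => meas_S x n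

lemma ber_true (h0 : 0 < lam) (hber : ∀ x : ℤ, P {ω | η ω x = true} = ENNReal.ofReal lam) (x : ℤ) :
    P.real {ω | η ω x = true} = lam := by
  simp [measureReal_def, hber, h0.le]

lemma ber_false (h0 : 0 < lam) (hmeas : ∀ x : ℤ, Measurable fun ω => η ω x)
    (hber : ∀ x : ℤ, P {ω | η ω x = true} = ENNReal.ofReal lam) (x : ℤ) :
    P.real {ω | η ω x = false} = 1 - lam := by
  have hm : MeasurableSet {ω | η ω x = true} := hmeas x (measurableSet_singleton true)
  have := probReal_compl_eq_one_sub (μ := P) hm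
  rw [ber_true h0 hber] at this
  rw [← this]; congr 1; ext ω; simp

lemma indep_step (hmeas : ∀ x : ℤ, Measurable fun ω => η ω x)
    (hindep : iIndepFun (fun x ω => η ω x) P) (x : ℤ) (B : Set Ω) (hB : MeasurableSet[past η x] B)
    (b : Bool) : P.real (B ∩ {ω | η ω (x+1) = b}) = P.real B * P.real {ω | η ω (x+1) = b} := by
  have h := indep_iSup_of_disjoint (fun i => (hmeas i).comap_le) hindep.iIndep
    (show Disjoint (Set.Iic x) {x+1} by simp)
  rw [Indep_iff] at h
  have := h B {ω | η ω (x+1) = b} hB (by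
    have hle : MeasurableSpace.comap (fun ω => η ω (x+1)) inferInstance ≤
        ⨆ i ∈ ({x+1} : Set ℤ), MeasurableSpace.comap (fun ω => η ω i) inferInstance :=
      le_iSup₂_of_le (x+1) rfl le_rfl
    exact hle _ ⟨{b}, measurableSet_singleton b, rfl⟩)
  simp [measureReal_def, this]

lemma map_eq (hmeas : ∀ x : ℤ, Measurable fun ω => η ω x)
    (hber : ∀ x : ℤ, P {ω | η ω x = true} = ENNReal.ofReal lam) (h0 : 0 < lam) (x y : ℤ) :
    P.map (fun ω => η ω x) = P.map (fun ω => η ω y) := by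
  refine Measure.ext_of_singleton fun b => ?_
  rw [Measure.map_apply (hmeas x) (measurableSet_singleton b),
    Measure.map_apply (hmeas y) (measurableSet_singleton b)]
  cases b with
  | true => exact (hber x).trans (hber y).symm
  | false =>
    have := (ber_false h0 hmeas hber x).trans (ber_false h0 hmeas hber y).symm
    exact (measureReal_eq_measureReal_iff).1 this

lemma ae_good (hmeas : ∀ x : ℤ, Measurable fun ω => η ω x)
    (hindep : iIndepFun (fun x ω => η ω x) P)
    (hber : ∀ x : ℤ, P {ω | η ω x = true} = ENNReal.ofReal lam) (h0 : 0 < lam) (h1 : lam < 1/2) :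
    ∀ᵐ ω ∂P, Good (η ω) := by
  unfold Good
  rw [ae_all_iff]
  intro x
  let f : Bool → ℝ := fun b => (st b : ℝ)
  have hf : Measurable f := measurable_of_countable f
  let X : ℕ → Ω → ℝ := fun i ω => f (η ω (x - i))
  have hX : ∀ i, Measurable (X i) := fun i => hf.comp (hmeas _)
  have hint : Integrable (X 0) P := by
    refine Integrable.of_bound (hX 0).aestronglyMeasurable 1 (ae_of_all _ fun ω => ?_)
    simp only [X, f]
    cases η ω (x - (0:ℕ)) <;> simp [st_true, st_false]
  have hmean : ∫ ω, X 0 ω ∂P = 2 * lam - 1 := by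
    have hm : MeasurableSet {ω | η ω x = true} := hmeas x (measurableSet_singleton true)
    have : X 0 = fun ω => 2 * ({ω | η ω x = true}.indicator 1 ω) - 1 := by
      ext ω
      simp only [X, f, Set.indicator, Set.mem_ofPred_eq]
      rw [show x - ((0:ℕ):ℤ) = x by simp]
      by_cases h : η ω x = true
      · rw [if_pos h, h, st_true]; norm_num
      · rw [if_neg h, Bool.eq_false_of_not_eq_true h, st_false]; norm_num
    rw [this, integral_sub, integral_const_mul, integral_indicator_one hm, ber_true h0 hber]
    · simp
    · exact ((integrable_indicator_iff hm).2 (integrable_const (1:ℝ)).integrableOn).const_mul 2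
    · exact integrable_const _
  have hsl := strong_law_ae_real X hint
    (fun i j hij => ((hindep.indepFun (i := x - i) (j := x - j) (by
      intro h; apply hij; lia)).comp hf hf))
    (fun i => (IdentDistrib.mk (hmeas _).aemeasurable (hmeas _).aemeasurable
      (map_eq hmeas hber h0 _ _)).comp hf)
  filter_upwards [hsl] with ω hω
  rw [hmean] at hω
  have hev := hω.eventually_lt_const (show 2 * lam - 1 < 0 by linarith)
  obtain ⟨N, hN⟩ := Filter.eventually_atTop.1 hev
  have hfin : BddAbove (S (η ω) x '' (Set.Iio N)) := ((Set.finite_Iio N).image _).bddAbove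
  obtain ⟨C, hC⟩ := hfin
  refine ⟨max C 0, ?_⟩
  rintro _ ⟨n, rfl⟩
  rcases lt_or_ge n N with hn | hn
  · exact le_max_of_le_left (hC ⟨n, hn, rfl⟩)
  · refine le_max_of_le_right ?_
    have h := hN n hn
    by_contra hcon
    push Not at hcon
    have : (0:ℝ) ≤ (∑ i ∈ Finset.range n, X i ω) / n := by
      refine div_nonneg ?_ (Nat.cast_nonneg n)
      have e : (∑ i ∈ Finset.range n, X i ω) = ((S (η ω) x n : ℤ) : ℝ) := by
        simp [S, X, f]
      rw [e]; exact_mod_cast hcon.le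
    linarith

lemma step_prob (hmeas : ∀ x : ℤ, Measurable fun ω => η ω x)
    (hindep : iIndepFun (fun x ω => η ω x) P)
    (hber : ∀ x : ℤ, P {ω | η ω x = true} = ENNReal.ofReal lam) (h0 : 0 < lam) (h1 : lam < 1/2)
    (x k l : ℤ) (B : Set Ω) (hB : MeasurableSet[past η x] B) (hBk : ∀ ω ∈ B, V (η ω) x = k) :
    P.real (B ∩ {ω | V (η ω) (x+1) = l}) = P.real B * pp lam k l := by
  have hg := ae_good hmeas hindep hber h0 h1
  have hm : MeasurableSet {ω | η ω (x+1) = true} := hmeas _ (measurableSet_singleton true)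
  have main : ∀ b : Bool, P.real (B ∩ {ω | V (η ω) (x+1) = l} ∩ {ω | η ω (x+1) = b}) =
      if l = max 0 (k + st b) then P.real B * P.real {ω | η ω (x+1) = b} else 0 := by
    intro b
    split_ifs with h
    · rw [← indep_step hmeas hindep x B hB]
      refine measureReal_congr ?_
      filter_upwards [hg] with ω hω
      refine propext ⟨fun hh => ⟨hh.1.1, hh.2⟩, fun hh => ⟨⟨hh.1, ?_⟩, hh.2⟩⟩
      have h2 : η ω (x+1) = b := hh.2
      change V (η ω) (x+1) = l
      rw [V_succ hω, hBk ω hh.1, h2, h]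
    · rw [← measureReal_empty (μ := P)]
      refine measureReal_congr ?_
      filter_upwards [hg] with ω hω
      refine propext ⟨fun hh => ?_, fun hh => hh.elim⟩
      have h2 : η ω (x+1) = b := hh.2
      have h3 : V (η ω) (x+1) = l := hh.1.2
      rw [V_succ hω, hBk ω hh.1.1, h2] at h3
      exact absurd h3.symm h
  rw [← measureReal_inter_add_sdiff (s := B ∩ {ω | V (η ω) (x+1) = l}) hm]
  have hd : (B ∩ {ω | V (η ω) (x+1) = l}) \ {ω | η ω (x+1) = true} =
      B ∩ {ω | V (η ω) (x+1) = l} ∩ {ω | η ω (x+1) = false} := by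
    ext ω; simp
  rw [hd, main, main, ber_true h0 hber, ber_false h0 hmeas hber, st_true, st_false, pp, mul_add,
    mul_ite, mul_ite, mul_zero, ← sub_eq_add_neg]

lemma stationary (hmeas : ∀ x : ℤ, Measurable fun ω => η ω x)
    (hindep : iIndepFun (fun x ω => η ω x) P)
    (hber : ∀ x : ℤ, P {ω | η ω x = true} = ENNReal.ofReal lam) (h0 : 0 < lam)
    (x y k : ℤ) : P.real {ω | V (η ω) x = k} = P.real {ω | V (η ω) y = k} := by
  let v : (ℕ → Bool) → ℤ := fun e => ⨆ n, ∑ i ∈ Finset.range n, st (e i)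
  have hv : Measurable v := by
    refine Measurable.iSup fun n => Finset.measurable_sum _ fun i _ => ?_
    exact (measurable_of_countable st).comp (measurable_pi_apply i)
  have hm : ∀ x : ℤ, Measurable (fun ω (i : ℕ) => η ω (x - i)) := fun x =>
    measurable_pi_lambda _ fun i => hmeas _
  have hmap : ∀ x : ℤ, P.map (fun ω (i : ℕ) => η ω (x - i)) =
      Measure.infinitePi (fun _ : ℕ => P.map (fun ω => η ω 0)) := by
    intro x
    have := iIndepFun.map_fun_eq_infinitePi_map (X := fun (i : ℕ) ω => η ω (x - i))
      (fun i => hmeas _)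
      (hindep.precomp (g := fun i : ℕ => x - (i:ℤ)) (by intro i j h; simpa using h))
    rw [this]
    congr 1
    funext i
    exact map_eq hmeas hber h0 _ _
  have hs : ∀ x, P {ω | V (η ω) x = k} = P.map (fun ω (i : ℕ) => η ω (x - i)) (v ⁻¹' {k}) := by
    intro x
    rw [Measure.map_apply (hm x) (hv (measurableSet_singleton k))]
    rfl
  rw [measureReal_def, measureReal_def, hs, hs, hmap, hmap]

lemma db (hmeas : ∀ x : ℤ, Measurable fun ω => η ω x)
    (hindep : iIndepFun (fun x ω => η ω x) P)
    (hber : ∀ x : ℤ, P {ω | η ω x = true} = ENNReal.ofReal lam) (h0 : 0 < lam) (h1 : lam < 1/2)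
    (k l : ℤ) : P.real {ω | V (η ω) 0 = k} * pp lam k l =
      P.real {ω | V (η ω) 0 = l} * pp lam l k := by
  have hg := ae_good hmeas hindep hber h0 h1
  have hV : ∀ x k, MeasurableSet[past η x] {ω | V (η ω) x = k} := fun x k =>
    meas_V x (measurableSet_singleton k)
  refine db_of lam (fun k => P.real {ω | V (η ω) 0 = k}) ?_ ?_ k l
  · intro k hk
    rw [← measureReal_empty (μ := P)]
    refine measureReal_congr ?_
    filter_upwards [hg] with ω hω
    refine propext ⟨fun hh => ?_, fun hh => hh.elim⟩
    have h3 : V (η ω) 0 = k := hh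
    have := V_nonneg hω 0
    lia
  · intro k hk
    rw [← step_prob hmeas hindep hber h0 h1 0 _ k _ (hV 0 _) (fun ω h => h),
      ← step_prob hmeas hindep hber h0 h1 0 _ k _ (hV 0 _) (fun ω h => h),
      stationary hmeas hindep hber h0 0 (0+1) k, ← measureReal_union]
    · refine measureReal_congr ?_
      filter_upwards [hg] with ω hω
      refine propext ⟨fun hh => ?_, fun hh => hh.elim (fun h => h.2) (fun h => h.2)⟩
      have h3 : V (η ω) (0+1) = k := hh
      have h4 := V_succ hω 0
      have h5 := V_nonneg hω 0
      have : V (η ω) 0 = max 0 (k-1) ∨ V (η ω) 0 = k+1 := by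
        cases hb : η ω (0+1)
        · rw [hb, st_false] at h4; lia
        · rw [hb, st_true] at h4; lia
      exact this.elim (fun h => Or.inl ⟨h, h3⟩) (fun h => Or.inr ⟨h, h3⟩)
    · rw [Set.disjoint_left]
      rintro ω ⟨ha, _⟩ ⟨hb, _⟩
      have ha' : V (η ω) 0 = max 0 (k-1) := ha
      have hb' : V (η ω) 0 = k+1 := hb
      lia
    · exact (past_le hmeas _ _ (hV 0 _)).inter (past_le hmeas _ _ (hV (0+1) _))

lemma path_set_meas (a : ℤ) (w : ℕ → ℤ) (n : ℕ) :
    MeasurableSet[past η (a + n)] {ω | ∀ i ≤ n, V (η ω) (a + i) = w i} := by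
  have : {ω | ∀ i ≤ n, V (η ω) (a + i) = w i} =
      ⋂ i ∈ Set.Iic n, {ω | V (η ω) (a + i) = w i} := by
    ext ω; simp
  rw [this]
  refine MeasurableSet.biInter (Set.to_countable _) fun i hi => ?_
  have hi' : i ≤ n := hi
  exact past_mono (show a + i ≤ a + n by lia) _ (meas_V (a+i) (measurableSet_singleton (w i)))

lemma path_prob (hmeas : ∀ x : ℤ, Measurable fun ω => η ω x)
    (hindep : iIndepFun (fun x ω => η ω x) P)
    (hber : ∀ x : ℤ, P {ω | η ω x = true} = ENNReal.ofReal lam) (h0 : 0 < lam) (h1 : lam < 1/2)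
    (a : ℤ) (w : ℕ → ℤ) (n : ℕ) :
    P.real {ω | ∀ i ≤ n, V (η ω) (a + i) = w i} =
      P.real {ω | V (η ω) 0 = w 0} * ∏ i ∈ Finset.range n, pp lam (w i) (w (i+1)) := by
  induction n with
  | zero =>
    rw [stationary hmeas hindep hber h0 0 a]
    simp
  | succ n ih =>
    rw [Finset.prod_range_succ, ← mul_assoc, ← ih,
      ← step_prob hmeas hindep hber h0 h1 (a+n) _ _ _ (path_set_meas a w n)
        (fun ω h => h n le_rfl)]
    congr 1
    ext ω
    simp only [Set.mem_ofPred_eq, Set.mem_inter_iff]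
    constructor
    · intro h
      refine ⟨fun i hi => h i (by lia), ?_⟩
      rw [← h (n+1) le_rfl]
      congr 1; push_cast; ring
    · rintro ⟨h, h'⟩ i hi
      rcases Nat.lt_or_ge n i with hn | hn
      · have : i = n + 1 := by lia
        subst this
        rw [← h']
        congr 1; push_cast; ring
      · exact h i hn

lemma window_rev (hmeas : ∀ x : ℤ, Measurable fun ω => η ω x)
    (hindep : iIndepFun (fun x ω => η ω x) P)
    (hber : ∀ x : ℤ, P {ω | η ω x = true} = ENNReal.ofReal lam) (h0 : 0 < lam) (h1 : lam < 1/2)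
    (w : ℤ → ℤ) (n : ℕ) :
    P {ω | ∀ j ∈ Finset.Icc (-(n:ℤ)) n, V (η ω) j = w j} =
      P {ω | ∀ j ∈ Finset.Icc (-(n:ℤ)) n, V (η ω) (-j) = w j} := by
  have e1 : {ω | ∀ j ∈ Finset.Icc (-(n:ℤ)) n, V (η ω) j = w j} =
      {ω | ∀ i ≤ 2 * n, V (η ω) (-(n:ℤ) + (i:ℕ)) = (fun i : ℕ => w (-(n:ℤ) + i)) i} := by
    ext ω
    simp only [Set.mem_ofPred_eq, Finset.mem_Icc]
    constructor
    · intro h i hi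
      exact h _ (by lia)
    · intro h j hj
      have := h (j + n).toNat (by lia)
      have e : -(n:ℤ) + (j + n).toNat = j := by lia
      rwa [e] at this
  have e2 : {ω | ∀ j ∈ Finset.Icc (-(n:ℤ)) n, V (η ω) (-j) = w j} =
      {ω | ∀ i ≤ 2 * n, V (η ω) (-(n:ℤ) + (i:ℕ)) =
        (fun i : ℕ => w (-(n:ℤ) + ((2 * n - i : ℕ) : ℤ))) i} := by
    ext ω
    simp only [Set.mem_ofPred_eq, Finset.mem_Icc]
    constructor
    · intro h i hi
      rw [← h _ (by lia)]
      congr 1; lia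
    · intro h j hj
      have := h (n - j).toNat (by lia)
      have e : -(n:ℤ) + (n - j).toNat = -j := by lia
      have e' : -(n:ℤ) + ((2 * n - (n - j).toNat : ℕ) : ℤ) = j := by lia
      rwa [e, e'] at this
  have := path_rev lam (fun k => P.real {ω | V (η ω) 0 = k}) (db hmeas hindep hber h0 h1)
    (fun i : ℕ => w (-(n:ℤ) + i)) (2 * n)
  rw [e1, e2, ← measureReal_eq_measureReal_iff, path_prob hmeas hindep hber h0 h1,
    path_prob hmeas hindep hber h0 h1]
  simpa using this

lemma law_rev (hmeas : ∀ x : ℤ, Measurable fun ω => η ω x)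
    (hindep : iIndepFun (fun x ω => η ω x) P)
    (hber : ∀ x : ℤ, P {ω | η ω x = true} = ENNReal.ofReal lam) (h0 : 0 < lam) (h1 : lam < 1/2) :
    P.map (fun ω (x : ℤ) => V (η ω) x) = P.map (fun ω (x : ℤ) => V (η ω) (-x)) := by
  have hV : ∀ x, Measurable fun ω => V (η ω) x := fun x =>
    (meas_V x).mono (past_le hmeas x) le_rfl
  have hf : Measurable (fun ω (x : ℤ) => V (η ω) x) := measurable_pi_lambda _ hV
  have hf' : Measurable (fun ω (x : ℤ) => V (η ω) (-x)) := measurable_pi_lambda _ fun x => hV _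
  have hp := Measure.isProbabilityMeasure_map (μ := P) hf.aemeasurable
  refine IsProjectiveLimit.unique
    (P := fun I : Finset ℤ => (P.map (fun ω (x : ℤ) => V (η ω) x)).map I.restrict)
    (fun I => rfl) (fun I => ?_)
  obtain ⟨n, hn⟩ : ∃ n : ℕ, I ⊆ Finset.Icc (-(n:ℤ)) n := by
    refine ⟨I.sup Int.natAbs, fun i hi => ?_⟩
    have := Finset.le_sup (f := Int.natAbs) hi
    rw [Finset.mem_Icc]; lia
  have hJ : (P.map (fun ω (x : ℤ) => V (η ω) (-x))).map (Finset.Icc (-(n:ℤ)) n).restrict =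
      (P.map (fun ω (x : ℤ) => V (η ω) x)).map (Finset.Icc (-(n:ℤ)) n).restrict := by
    refine Measure.ext_of_singleton fun u => ?_
    have hu := measurableSet_singleton u
    have hr := Finset.measurable_restrict (X := fun _ : ℤ => ℤ) (Finset.Icc (-(n:ℤ)) n)
    rw [Measure.map_apply hr hu, Measure.map_apply hr hu, Measure.map_apply hf (hr hu),
      Measure.map_apply hf' (hr hu)]
    have hw := window_rev hmeas hindep hber h0 h1
      (fun j => if hj : j ∈ Finset.Icc (-(n:ℤ)) n then u ⟨j, hj⟩ else 0) n
    convert hw.symm using 2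
    all_goals
      ext ω
      simp only [Set.mem_preimage, Set.mem_singleton_iff, Set.mem_ofPred_eq, funext_iff,
        Subtype.forall, Finset.restrict]
      refine forall₂_congr fun j hj => ?_
      rw [dif_pos hj]
  change _ = (P.map (fun ω (x : ℤ) => V (η ω) x)).map I.restrict
  rw [← Finset.restrict₂_comp_restrict hn,
    ← Measure.map_map (Finset.measurable_restrict₂ hn) (Finset.measurable_restrict _),
    ← Measure.map_map (Finset.measurable_restrict₂ hn) (Finset.measurable_restrict _), hJ]

end prob
end RW

open MeasureTheory ProbabilityTheory in
/-- Let `(η(x))_{x∈ℤ}` be i.i.d. Bernoulli(`lam`) with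
`0 < lam < 1/2`, let `ξ` be the walk lift of `η` with `ξ(0) = 0`, and let
`W(x) = ξ(x) − min_{y≤x} ξ(y)`.  Then `W` is reversible: `(W(x))_{x∈ℤ}` has the
same law as `(W(−x))_{x∈ℤ}`. -/
theorem reflected_walk_reversible {Ω : Type*} [MeasurableSpace Ω]
    (P : Measure Ω) [IsProbabilityMeasure P] (lam : ℝ) (h0 : 0 < lam)
    (h1 : lam < 1 / 2) (η : Ω → Cfg) (hmeas : ∀ x : ℤ, Measurable fun ω => η ω x)
    (hindep : iIndepFun (fun x ω => η ω x) P)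
    (hber : ∀ x : ℤ, P {ω | η ω x = true} = ENNReal.ofReal lam) :
    P.map (fun ω => fun x : ℤ => xi0 (η ω) x - runMin (xi0 (η ω)) x) =
      P.map (fun ω => fun x : ℤ => xi0 (η ω) (-x) - runMin (xi0 (η ω)) (-x)) := by
  have hg := RW.ae_good hmeas hindep hber h0 h1
  have e1 : (fun ω => fun x : ℤ => xi0 (η ω) x - runMin (xi0 (η ω)) x) =ᵐ[P]
      fun ω (x : ℤ) => RW.V (η ω) x := by
    filter_upwards [hg] with ω hω
    funext x
    exact RW.W_eq hω x
  have e2 : (fun ω => fun x : ℤ => xi0 (η ω) (-x) - runMin (xi0 (η ω)) (-x)) =ᵐ[P]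
      fun ω (x : ℤ) => RW.V (η ω) (-x) := by
    filter_upwards [hg] with ω hω
    funext x
    exact RW.W_eq hω (-x)
  rw [Measure.map_congr e1, Measure.map_congr e2]
  exact RW.law_rev hmeas hindep hber h0 h1
end
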